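/- Entropic hypocoercivity for the linear relaxation Boltzmann equation: there exist positive constants Λ, α, β, γ (depending only on λ, not on the dimension d) such that for every smooth h : [0,∞) × 𝕋^d × ℝ^d → ℝ that is bounded above and below by positive constants, has all partial derivatives bounded, satisfies ∫ h(t,·) dμ = 1 for all t, and solves ∂_t h + v·∇_x h = λ(Πh − h), one has for all t ≥ 0: I(h_t) + β H_Π(h_t) ≤ exp(−Λt) (α I(h_0) + 2β H_Π(h_0)), and consequently H(h_t) ≤ γ exp(−Λt) I(h_0). -/

import Mathlib

/-!
The proof is a hypocoercivity argument for the Lyapunov functional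
`E(t) = ∫ (a |∇_x h|² + 2 ∇_x h · ∇_v h + 2 |∇_v h|²) / h dμ + β H_Π(h)`.

*Dissipation.* Write `ρ = Πh` and `D = ∂_t + v · ∇_x`. Differentiating the equation gives
`D h = λ (ρ - h)`, `D ∂ₓh = λ (∂ₓρ - ∂ₓh)` and `D ∂ᵥh = -λ ∂ᵥh - ∂ₓh`. Since `μ` is invariant under
transport, the derivative of a mean is the mean of the material derivative
(`BddC1.hasDerivAt_integral`). The projected entropy is written as `∫ h log ρ dμ`; by the Gaussian
integration by parts its derivative is `∫ ∇_v h · ∇_x ρ / ρ dμ`. Modulo terms of zero mean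
(`nullTerm`), the material derivative of the density of `E` splits coordinatewise, and in terms of
`x = ∂ₓh/h`, `y = ∂ᵥh/h`, `z = ∂ₓρ/ρ` it equals `-h (2 x² + λ y²)` minus two quadratic forms in
`(x - z, y)`, which are nonnegative for the chosen `a` and `β` (`dissipation_pointwise`). Hence
`E' ≤ -(2 I^X + λ I^V)`.

*Logarithmic Sobolev inequalities.* On `[0,1]` the inequality follows from the bound of the entropy
by the `χ²`-divergence and of the oscillation by `∫ |f'|` (`logSob_unif`). Inequalities of this kind
tensorize (`LogSob.prod`), are transported by affine maps (`LogSob.map`) and pass to weak limits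
(`LogSob.of_tendsto`), so the central limit theorem yields the Gaussian one with constant 12
(`logSob_gaussian`). The constants do not depend on the dimension.

*Conclusion.* The inequality on the torus and Cauchy–Schwarz give `H_Π ≤ I^X`, so `E` is bounded by
a multiple of `I^X` and `I^V`, and Grönwall's lemma gives exponential decay of `E`. The form defining
`E` is comparable to `|∇_x h|² + |∇_v h|²`, which is the first claim; the second one follows from
`H ≤ 12 I` on phase space and `0 ≤ H_Π ≤ I`.
-/

open MeasureTheory Real Filter

noncomputable section

/-- The standard Gaussian density `ℳ(v) = (2π)^{-d/2} exp(-|v|²/2)` on `ℝ^d`. -/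
def gauss (d : ℕ) (v : Fin d → ℝ) : ℝ :=
  (2 * Real.pi) ^ (-(d : ℝ) / 2) * Real.exp (-(∑ i, v i ^ 2) / 2)

/-- Fundamental domain `[0,1]^d` of the torus `𝕋^d`; the normalized Lebesgue measure on
the torus is the restriction of Lebesgue measure to this cube. -/
def cube (d : ℕ) : Set (Fin d → ℝ) := Set.Icc 0 1

/-- A function of `(x,v)` represents a function on `𝕋^d × ℝ^d` iff it is `ℤ^d`-periodic in `x`. -/
def IsPeriodic (d : ℕ) (f : (Fin d → ℝ) → (Fin d → ℝ) → ℝ) : Prop :=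
  ∀ (x v : Fin d → ℝ) (k : Fin d → ℤ), f (x + fun i => (k i : ℝ)) v = f x v

/-- The projection `Πf(x) = ∫ f(x,u) ℳ(u) du`. -/
def proj (d : ℕ) (f : (Fin d → ℝ) → (Fin d → ℝ) → ℝ) (x : Fin d → ℝ) : ℝ :=
  ∫ u, f x u * gauss d u

/-- Euclidean dot product on `ℝ^d`. -/
def dotp (d : ℕ) (a b : Fin d → ℝ) : ℝ := ∑ i, a i * b i

/-- Squared Euclidean norm on `ℝ^d`. -/
def nsq (d : ℕ) (a : Fin d → ℝ) : ℝ := ∑ i, a i ^ 2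

/-- Gradient in the `x` variable. -/
def gradx (d : ℕ) (f : (Fin d → ℝ) → (Fin d → ℝ) → ℝ) (x v : Fin d → ℝ) : Fin d → ℝ :=
  fun i => fderiv ℝ (fun y => f y v) x (Pi.single i 1)

/-- Gradient in the `v` variable. -/
def gradv (d : ℕ) (f : (Fin d → ℝ) → (Fin d → ℝ) → ℝ) (x v : Fin d → ℝ) : Fin d → ℝ :=
  fun i => fderiv ℝ (fun w => f x w) v (Pi.single i 1)

/-- Gradient of a function of `x` only. -/
def grad1 (d : ℕ) (g : (Fin d → ℝ) → ℝ) (x : Fin d → ℝ) : Fin d → ℝ :=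
  fun i => fderiv ℝ g x (Pi.single i 1)

/-- Laplacian in the `v` variable. -/
def lapv (d : ℕ) (f : (Fin d → ℝ) → (Fin d → ℝ) → ℝ) (x v : Fin d → ℝ) : ℝ :=
  ∑ i, fderiv ℝ (fun w => gradv d f x w i) v (Pi.single i 1)

/-- Integral against `μ = ℳ(v) dv dx` on `𝕋^d × ℝ^d`. -/
def intMu (d : ℕ) (F : (Fin d → ℝ) → (Fin d → ℝ) → ℝ) : ℝ :=
  ∫ x in cube d, ∫ v, F x v * gauss d v

/-- `I^X(h) = ∫ |∇_x h|²/h dμ`. -/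
def IX (d : ℕ) (h : (Fin d → ℝ) → (Fin d → ℝ) → ℝ) : ℝ :=
  intMu d fun x v => nsq d (gradx d h x v) / h x v

/-- `I^V(h) = ∫ |∇_v h|²/h dμ`. -/
def IV (d : ℕ) (h : (Fin d → ℝ) → (Fin d → ℝ) → ℝ) : ℝ :=
  intMu d fun x v => nsq d (gradv d h x v) / h x v

/-- `I^M(h) = ∫ (∇_x h · ∇_v h)/h dμ`. -/
def IM (d : ℕ) (h : (Fin d → ℝ) → (Fin d → ℝ) → ℝ) : ℝ :=
  intMu d fun x v => dotp d (gradx d h x v) (gradv d h x v) / h x v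

/-- The full Fisher information `I(h) = ∫ |∇_{x,v} h|²/h dμ`. -/
def Ifull (d : ℕ) (h : (Fin d → ℝ) → (Fin d → ℝ) → ℝ) : ℝ :=
  intMu d fun x v => (nsq d (gradx d h x v) + nsq d (gradv d h x v)) / h x v

/-- `I^{ΠX}(h) = ∫_{𝕋^d} |∇_x Πh|²/Πh dx`. -/
def IPiX (d : ℕ) (h : (Fin d → ℝ) → (Fin d → ℝ) → ℝ) : ℝ :=
  ∫ x in cube d, nsq d (grad1 d (proj d h) x) / proj d h x

/-- `I^{ΠX/X}(h) = ∫ (|∇_x(Πh/h)|²/(Πh/h)) h dμ`. -/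
def IPiXX (d : ℕ) (h : (Fin d → ℝ) → (Fin d → ℝ) → ℝ) : ℝ :=
  intMu d fun x v =>
    nsq d (gradx d (fun y w => proj d h y / h y w) x v) / (proj d h x / h x v) * h x v

/-- `I^{ΠV/V}(h) = ∫ (|∇_v h|²/h)(Πh/h) dμ`. -/
def IPiVV (d : ℕ) (h : (Fin d → ℝ) → (Fin d → ℝ) → ℝ) : ℝ :=
  intMu d fun x v => nsq d (gradv d h x v) / h x v * (proj d h x / h x v)

/-- The relative entropy `H(h) = ∫ h log h dμ`. -/
def Hent (d : ℕ) (h : (Fin d → ℝ) → (Fin d → ℝ) → ℝ) : ℝ :=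
  intMu d fun x v => h x v * Real.log (h x v)

/-- The projected entropy `H_Π(h) = ∫_{𝕋^d} Πh log Πh dx`. -/
def HPi (d : ℕ) (h : (Fin d → ℝ) → (Fin d → ℝ) → ℝ) : ℝ :=
  ∫ x in cube d, proj d h x * Real.log (proj d h x)

/-- The local average speed `U(x) = ∫ v h(x,v) ℳ(v) dv`. -/
def Uvec (d : ℕ) (h : (Fin d → ℝ) → (Fin d → ℝ) → ℝ) (x : Fin d → ℝ) : Fin d → ℝ :=
  fun i => ∫ v, v i * h x v * gauss d v

/-- The divergence `∇_x · U`. -/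
def divU (d : ℕ) (h : (Fin d → ℝ) → (Fin d → ℝ) → ℝ) (x : Fin d → ℝ) : ℝ :=
  ∑ i, fderiv ℝ (fun y => Uvec d h y i) x (Pi.single i 1)

/-- The `p`-entropy `H^{(p)}(h) = ∫ (h^p - h)/(p(p-1)) dμ`. -/
def Hp (d : ℕ) (p : ℝ) (h : (Fin d → ℝ) → (Fin d → ℝ) → ℝ) : ℝ :=
  intMu d fun x v => (h x v ^ p - h x v) / (p * (p - 1))

/-- The projected `p`-entropy `H_Π^{(p)}(h) = ∫_{𝕋^d} ((Πh)^p - Πh)/(p(p-1)) dx`. -/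
def HpPi (d : ℕ) (p : ℝ) (h : (Fin d → ℝ) → (Fin d → ℝ) → ℝ) : ℝ :=
  ∫ x in cube d, ((proj d h x) ^ p - proj d h x) / (p * (p - 1))

/-- The `p`-Fisher information `I^{(p)}(h) = ∫ h^{p-2} |∇_{x,v} h|² dμ`. -/
def Ipfull (d : ℕ) (p : ℝ) (h : (Fin d → ℝ) → (Fin d → ℝ) → ℝ) : ℝ :=
  intMu d fun x v => h x v ^ (p - 2) * (nsq d (gradx d h x v) + nsq d (gradv d h x v))

/-- The spatial `p`-Fisher information `∫ h^{p-2} |∇_x h|² dμ`. -/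
def IpX (d : ℕ) (p : ℝ) (h : (Fin d → ℝ) → (Fin d → ℝ) → ℝ) : ℝ :=
  intMu d fun x v => h x v ^ (p - 2) * nsq d (gradx d h x v)

/-- Regularity of a time-dependent `h`: smooth, periodic in `x`, bounded above and below by
positive constants, with all partial derivatives bounded. -/
def Regular (d : ℕ) (h : ℝ → (Fin d → ℝ) → (Fin d → ℝ) → ℝ) : Prop :=
  ContDiff ℝ (⊤ : ℕ∞) (fun q : ℝ × (Fin d → ℝ) × (Fin d → ℝ) => h q.1 q.2.1 q.2.2) ∧
  (∀ t, IsPeriodic d (h t)) ∧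
  (∃ c C : ℝ, 0 < c ∧ ∀ t x v, c ≤ h t x v ∧ h t x v ≤ C) ∧
  (∀ n : ℕ, ∃ C : ℝ, ∀ q : ℝ × (Fin d → ℝ) × (Fin d → ℝ),
    ‖iteratedFDeriv ℝ n (fun r : ℝ × (Fin d → ℝ) × (Fin d → ℝ) => h r.1 r.2.1 r.2.2) q‖ ≤ C)

/-- Regularity of a time-independent `h`: smooth, periodic in `x`, bounded above and below by
positive constants, with bounded gradient. -/
def RegularStatic (d : ℕ) (h : (Fin d → ℝ) → (Fin d → ℝ) → ℝ) : Prop :=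
  ContDiff ℝ (⊤ : ℕ∞) (fun q : (Fin d → ℝ) × (Fin d → ℝ) => h q.1 q.2) ∧
  IsPeriodic d h ∧
  (∃ c C : ℝ, 0 < c ∧ ∀ x v, c ≤ h x v ∧ h x v ≤ C) ∧
  (∃ C : ℝ, ∀ q : (Fin d → ℝ) × (Fin d → ℝ),
    ‖fderiv ℝ (fun r : (Fin d → ℝ) × (Fin d → ℝ) => h r.1 r.2) q‖ ≤ C)

/-- `h` solves the linear relaxation Boltzmann equation `∂_t h + v·∇_x h = λ(Πh - h)` for `t ≥ 0`. -/
def SolvesLRB (d : ℕ) (lam : ℝ) (h : ℝ → (Fin d → ℝ) → (Fin d → ℝ) → ℝ) : Prop :=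
  ∀ t x v, 0 ≤ t →
    deriv (fun s => h s x v) t + dotp d v (gradx d (h t) x v)
      = lam * (proj d (h t) x - h t x v)

/-- `h` solves the free transport equation `∂_t h + v·∇_x h = 0` for `t ≥ 0`. -/
def SolvesTransport (d : ℕ) (h : ℝ → (Fin d → ℝ) → (Fin d → ℝ) → ℝ) : Prop :=
  ∀ t x v, 0 ≤ t →
    deriv (fun s => h s x v) t + dotp d v (gradx d (h t) x v) = 0

/-- `h` solves the pure relaxation equation `∂_t h = λ(Πh - h)` for `t ≥ 0`. -/
def SolvesCollision (d : ℕ) (lam : ℝ) (h : ℝ → (Fin d → ℝ) → (Fin d → ℝ) → ℝ) : Prop :=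
  ∀ t x v, 0 ≤ t →
    deriv (fun s => h s x v) t = lam * (proj d (h t) x - h t x v)

/-- `h` solves the kinetic Fokker–Planck equation `∂_t h + v·∇_x h = Δ_v h - v·∇_v h` for `t ≥ 0`. -/
def SolvesKFP (d : ℕ) (h : ℝ → (Fin d → ℝ) → (Fin d → ℝ) → ℝ) : Prop :=
  ∀ t x v, 0 ≤ t →
    deriv (fun s => h s x v) t + dotp d v (gradx d (h t) x v)
      = lapv d (h t) x v - dotp d v (gradv d (h t) x v)

/-! ### Bounded functions of class `C¹` -/

/-- The class of `C¹` functions that are bounded together with their differential. -/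
structure BddC1 {E : Type*} [NormedAddCommGroup E] [NormedSpace ℝ E] (f : E → ℝ) : Prop where
  contDiff : ContDiff ℝ 1 f
  bdd : ∃ C, ∀ x, |f x| ≤ C
  bdd_fderiv : ∃ C, ∀ x, ‖fderiv ℝ f x‖ ≤ C

namespace BddC1

section Closure

variable {E F : Type*} [NormedAddCommGroup E] [NormedSpace ℝ E]
  [NormedAddCommGroup F] [NormedSpace ℝ F] {f g : E → ℝ}

theorem differentiable (hf : BddC1 f) : Differentiable ℝ f :=
  hf.contDiff.differentiable (by norm_num)

theorem continuous (hf : BddC1 f) : Continuous f := hf.contDiff.continuous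

theorem continuous_fderiv (hf : BddC1 f) : Continuous (fderiv ℝ f) :=
  hf.contDiff.continuous_fderiv (by norm_num)

theorem const (c : ℝ) : BddC1 (fun _ : E => c) :=
  ⟨contDiff_const, ⟨|c|, fun _ => le_rfl⟩, ⟨0, fun x => by simp⟩⟩

theorem add (hf : BddC1 f) (hg : BddC1 g) : BddC1 (fun x => f x + g x) := by
  obtain ⟨A, hA⟩ := hf.bdd
  obtain ⟨B, hB⟩ := hg.bdd
  obtain ⟨A', hA'⟩ := hf.bdd_fderiv
  obtain ⟨B', hB'⟩ := hg.bdd_fderiv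
  refine ⟨hf.contDiff.add hg.contDiff, ⟨A + B, fun x => ?_⟩, ⟨A' + B', fun x => ?_⟩⟩
  · exact (abs_add_le _ _).trans (add_le_add (hA x) (hB x))
  · rw [fderiv_fun_add (hf.differentiable x) (hg.differentiable x)]
    exact (norm_add_le _ _).trans (add_le_add (hA' x) (hB' x))

theorem mul (hf : BddC1 f) (hg : BddC1 g) : BddC1 (fun x => f x * g x) := by
  obtain ⟨A, hA⟩ := hf.bdd
  obtain ⟨B, hB⟩ := hg.bdd
  obtain ⟨A', hA'⟩ := hf.bdd_fderiv
  obtain ⟨B', hB'⟩ := hg.bdd_fderiv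
  refine ⟨hf.contDiff.mul hg.contDiff, ⟨A * B, fun x => ?_⟩, ⟨A * B' + B * A', fun x => ?_⟩⟩
  · rw [abs_mul]
    exact mul_le_mul (hA x) (hB x) (abs_nonneg _) ((abs_nonneg _).trans (hA x))
  · rw [fderiv_fun_mul (hf.differentiable x) (hg.differentiable x)]
    refine (norm_add_le _ _).trans (add_le_add ?_ ?_)
    · rw [norm_smul]
      exact mul_le_mul (hA x) (hB' x) (norm_nonneg _) ((abs_nonneg _).trans (hA x))
    · rw [norm_smul]
      exact mul_le_mul (hB x) (hA' x) (norm_nonneg _) ((abs_nonneg _).trans (hB x))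

theorem sum {ι : Type*} (s : Finset ι) {f : ι → E → ℝ} (hf : ∀ i, BddC1 (f i)) :
    BddC1 (fun x => ∑ i ∈ s, f i x) := by
  classical
  induction s using Finset.induction_on with
  | empty => simpa using const 0
  | insert i s hi ih => simpa [Finset.sum_insert hi] using (hf i).add ih

theorem fderiv_inv (hf : BddC1 f) {x : E} (hx : 0 < f x) :
    HasFDerivAt (fun y => (f y)⁻¹) ((-(f x ^ 2)⁻¹) • fderiv ℝ f x) x :=
  (hasDerivAt_inv hx.ne').comp_hasFDerivAt x (hf.differentiable x).hasFDerivAt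

theorem inv (hf : BddC1 f) {c : ℝ} (hc : 0 < c) (hcf : ∀ x, c ≤ f x) :
    BddC1 (fun x => (f x)⁻¹) := by
  obtain ⟨A', hA'⟩ := hf.bdd_fderiv
  have hpos x : 0 < f x := hc.trans_le (hcf x)
  refine ⟨hf.contDiff.inv fun x => (hpos x).ne', ⟨c⁻¹, fun x => ?_⟩,
    ⟨(c ^ 2)⁻¹ * A', fun x => ?_⟩⟩
  · rw [abs_of_pos (inv_pos.2 (hpos x))]
    exact inv_anti₀ hc (hcf x)
  · rw [(hf.fderiv_inv (hpos x)).fderiv, norm_smul, norm_neg, Real.norm_of_nonneg (by positivity)]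
    have := hcf x
    exact mul_le_mul (by gcongr) (hA' x) (norm_nonneg _) (by positivity)

theorem div (hf : BddC1 f) (hg : BddC1 g) {c : ℝ} (hc : 0 < c) (hcg : ∀ x, c ≤ g x) :
    BddC1 (fun x => f x / g x) := by
  simpa only [div_eq_mul_inv] using hf.mul (hg.inv hc hcg)

theorem log (hf : BddC1 f) {c : ℝ} (hc : 0 < c) (hcf : ∀ x, c ≤ f x) :
    BddC1 (fun x => Real.log (f x)) := by
  obtain ⟨A, hA⟩ := hf.bdd
  obtain ⟨A', hA'⟩ := hf.bdd_fderiv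
  have hpos x : 0 < f x := hc.trans_le (hcf x)
  refine ⟨hf.contDiff.log fun x => (hpos x).ne', ⟨|Real.log c| + |Real.log A|, fun x => ?_⟩,
    ⟨c⁻¹ * A', fun x => ?_⟩⟩
  · have h1 : Real.log c ≤ Real.log (f x) := Real.log_le_log hc (hcf x)
    have h2 : Real.log (f x) ≤ Real.log A := Real.log_le_log (hpos x) ((le_abs_self _).trans (hA x))
    have := neg_abs_le (Real.log c)
    have := le_abs_self (Real.log A)
    have := abs_nonneg (Real.log A)
    have := abs_nonneg (Real.log c)
    exact abs_le.2 ⟨by linarith, by linarith⟩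
  · rw [fderiv.log (hf.differentiable x) (hpos x).ne', norm_smul,
      Real.norm_of_nonneg (inv_pos.2 (hpos x)).le]
    exact mul_le_mul (inv_anti₀ hc (hcf x)) (hA' x) (norm_nonneg _) (by positivity)

theorem hasFDerivAt_comp_affine {f : F → ℝ} (hf : BddC1 f) (A : E →L[ℝ] F) (b : F) (x : E) :
    HasFDerivAt (fun y => f (A y + b)) ((fderiv ℝ f (A x + b)).comp A) x :=
  HasFDerivAt.comp x (hf.differentiable (A x + b)).hasFDerivAt (A.hasFDerivAt.add_const b)

theorem comp_affine {f : F → ℝ} (hf : BddC1 f) (A : E →L[ℝ] F) (b : F) :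
    BddC1 (fun x => f (A x + b)) := by
  obtain ⟨C, hC⟩ := hf.bdd
  obtain ⟨C', hC'⟩ := hf.bdd_fderiv
  refine ⟨hf.contDiff.comp (A.contDiff.add contDiff_const), ⟨C, fun x => hC _⟩,
    ⟨C' * ‖A‖, fun x => ?_⟩⟩
  rw [(hf.hasFDerivAt_comp_affine A b x).fderiv]
  exact (ContinuousLinearMap.opNorm_comp_le _ _).trans
    (mul_le_mul_of_nonneg_right (hC' _) (norm_nonneg _))

theorem comp_clm {f : F → ℝ} (hf : BddC1 f) (A : E →L[ℝ] F) : BddC1 (fun x => f (A x)) := by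
  simpa using hf.comp_affine A 0

theorem bdd_fderiv_apply (hf : BddC1 f) (e : E) : ∃ C, ∀ x, |fderiv ℝ f x e| ≤ C := by
  obtain ⟨C', hC'⟩ := hf.bdd_fderiv
  exact ⟨C' * ‖e‖, fun x => ((fderiv ℝ f x).le_opNorm e).trans
    (mul_le_mul_of_nonneg_right (hC' _) (norm_nonneg _))⟩

theorem continuous_fderiv_apply (hf : BddC1 f) (e : E) : Continuous fun x => fderiv ℝ f x e :=
  hf.continuous_fderiv.clm_apply continuous_const

end Closure

end BddC1

/-- A bounded continuous function is integrable for a finite measure. -/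
theorem integrable_of_continuous_bdd {E : Type*} [TopologicalSpace E] [SecondCountableTopology E]
    [MeasurableSpace E] [OpensMeasurableSpace E] {μ : Measure E} [IsFiniteMeasure μ] {f : E → ℝ}
    (hf : Continuous f) (hb : ∃ C, ∀ x, |f x| ≤ C) : Integrable f μ := by
  obtain ⟨C, hC⟩ := hb
  exact Integrable.of_bound hf.aestronglyMeasurable C (Eventually.of_forall hC)

theorem BddC1.integrable {E : Type*} [NormedAddCommGroup E] [NormedSpace ℝ E]
    [SecondCountableTopology E] [MeasurableSpace E] [BorelSpace E] {μ : Measure E}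
    [IsFiniteMeasure μ] {f : E → ℝ} (hf : BddC1 f) : Integrable f μ :=
  integrable_of_continuous_bdd hf.continuous hf.bdd

theorem BddC1.integrable_fderiv {E : Type*} [NormedAddCommGroup E] [NormedSpace ℝ E]
    [SecondCountableTopology E] [MeasurableSpace E] [BorelSpace E] {μ : Measure E}
    [IsFiniteMeasure μ] {f : E → ℝ} (hf : BddC1 f) (e : E) :
    Integrable (fun x => fderiv ℝ f x e) μ :=
  integrable_of_continuous_bdd (hf.continuous_fderiv_apply e) (hf.bdd_fderiv_apply e)

section Average

variable {E F : Type*} [NormedAddCommGroup E] [NormedSpace ℝ E]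
  [NormedAddCommGroup F] [NormedSpace ℝ F]

theorem BddC1.slice_right {G : E × F → ℝ} (hG : BddC1 G) (x : E) : BddC1 (fun z => G (x, z)) := by
  simpa using hG.comp_affine (ContinuousLinearMap.inr ℝ E F) (x, 0)

theorem BddC1.fderiv_slice_right {G : E × F → ℝ} (hG : BddC1 G) (x : E) (z w : F) :
    fderiv ℝ (fun z => G (x, z)) z w = fderiv ℝ G (x, z) (0, w) := by
  have := (hG.hasFDerivAt_comp_affine (ContinuousLinearMap.inr ℝ E F) (x, 0) z).fderiv
  simp only [ContinuousLinearMap.inr_apply, Prod.mk_add_mk, zero_add, add_zero] at this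
  rw [this]; simp

theorem BddC1.fderiv_slice_left {G : E × F → ℝ} (hG : BddC1 G) (x e : E) (z : F) :
    fderiv ℝ (fun x => G (x, z)) x e = fderiv ℝ G (x, z) (e, 0) := by
  have := (hG.hasFDerivAt_comp_affine (ContinuousLinearMap.inl ℝ E F) (0, z) x).fderiv
  simp only [ContinuousLinearMap.inl_apply, Prod.mk_add_mk, zero_add, add_zero] at this
  rw [this]; simp

variable [SecondCountableTopology F] [MeasurableSpace F] [BorelSpace F]

theorem BddC1.aestronglyMeasurable_partial {G : E × F → ℝ} (hG : BddC1 G) (μ : Measure F) (x : E) :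
    AEStronglyMeasurable
      (fun z => (fderiv ℝ G (x, z)).comp (ContinuousLinearMap.inl ℝ E F)) μ := by
  have : SecondCountableTopologyEither F (E →L[ℝ] ℝ) := secondCountableTopologyEither_of_left F _
  exact ((hG.continuous_fderiv.comp (by fun_prop : Continuous fun z : F => (x, z))).clm_comp
    continuous_const).aestronglyMeasurable

theorem BddC1.hasFDerivAt_average {G : E × F → ℝ} (hG : BddC1 G) (μ : Measure F)
    [IsProbabilityMeasure μ] (x : E) :
    HasFDerivAt (fun x => ∫ z, G (x, z) ∂μ)
      (∫ z, (fderiv ℝ G (x, z)).comp (ContinuousLinearMap.inl ℝ E F) ∂μ) x := by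
  obtain ⟨C', hC'⟩ := hG.bdd_fderiv
  have hcont (x : E) : Continuous fun z : F => G (x, z) := hG.continuous.comp (by fun_prop)
  refine hasFDerivAt_integral_of_dominated_of_fderiv_le (s := Set.univ) (F := fun x z => G (x, z))
    (F' := fun x z => (fderiv ℝ G (x, z)).comp (ContinuousLinearMap.inl ℝ E F))
    (bound := fun _ => C' * ‖ContinuousLinearMap.inl ℝ E F‖) univ_mem
    (Eventually.of_forall fun x => (hcont x).aestronglyMeasurable) (hG.slice_right x).integrable
    (hG.aestronglyMeasurable_partial μ x) (Eventually.of_forall fun z x _ => ?_)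
    (integrable_const _) (Eventually.of_forall fun z x _ => ?_)
  · exact (ContinuousLinearMap.opNorm_comp_le _ _).trans
      (mul_le_mul_of_nonneg_right (hC' _) (norm_nonneg _))
  · simpa using hG.hasFDerivAt_comp_affine (ContinuousLinearMap.inl ℝ E F) (0, z) x

theorem BddC1.fderiv_average {G : E × F → ℝ} (hG : BddC1 G) (μ : Measure F)
    [IsProbabilityMeasure μ] (x e : E) :
    fderiv ℝ (fun x => ∫ z, G (x, z) ∂μ) x e = ∫ z, fderiv ℝ G (x, z) (e, 0) ∂μ := by
  obtain ⟨C', hC'⟩ := hG.bdd_fderiv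
  rw [(hG.hasFDerivAt_average μ x).fderiv, ContinuousLinearMap.integral_apply]
  · simp
  · refine Integrable.of_bound (hG.aestronglyMeasurable_partial μ x)
      (C' * ‖ContinuousLinearMap.inl ℝ E F‖) (Eventually.of_forall fun z => ?_)
    · exact (ContinuousLinearMap.opNorm_comp_le _ _).trans
        (mul_le_mul_of_nonneg_right (hC' _) (norm_nonneg _))

theorem BddC1.average {G : E × F → ℝ} (hG : BddC1 G) (μ : Measure F)
    [IsProbabilityMeasure μ] : BddC1 (fun x => ∫ z, G (x, z) ∂μ) := by
  obtain ⟨C, hC⟩ := hG.bdd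
  obtain ⟨C', hC'⟩ := hG.bdd_fderiv
  have hb (x : E) (z : F) : ‖(fderiv ℝ G (x, z)).comp (ContinuousLinearMap.inl ℝ E F)‖
      ≤ C' * ‖ContinuousLinearMap.inl ℝ E F‖ :=
    (ContinuousLinearMap.opNorm_comp_le _ _).trans
        (mul_le_mul_of_nonneg_right (hC' _) (norm_nonneg _))
  refine ⟨contDiff_one_iff_hasFDerivAt.2 ⟨_, ?_, hG.hasFDerivAt_average μ⟩,
    ⟨C, fun x => ?_⟩, ⟨C' * ‖ContinuousLinearMap.inl ℝ E F‖, fun x => ?_⟩⟩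
  · refine continuous_of_dominated (bound := fun _ => C' * ‖ContinuousLinearMap.inl ℝ E F‖)
      (hG.aestronglyMeasurable_partial μ) (fun x => Eventually.of_forall (hb x))
      (integrable_const _) (Eventually.of_forall fun z => ?_)
    · exact (hG.continuous_fderiv.comp (by fun_prop : Continuous fun x : E => (x, z))).clm_comp
        continuous_const
  · simpa using norm_integral_le_of_norm_le_const (μ := μ) (f := fun z => G (x, z))
      (Eventually.of_forall fun z => hC (x, z))
  · rw [(hG.hasFDerivAt_average μ x).fderiv]
    simpa using norm_integral_le_of_norm_le_const (μ := μ) (Eventually.of_forall fun z => hb x z)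

end Average

/-! ### Logarithmic Sobolev inequalities and their stability -/

/-- `LogSob μ e`: the probability measure `μ` satisfies the logarithmic Sobolev inequality
`Ent_μ(f) ≤ ∫ (∑ᵢ (∂_{eᵢ} f)²) / f dμ`. The constant of the inequality is carried by the
directions `eᵢ`. -/
def LogSob {E ι : Type*} [NormedAddCommGroup E] [NormedSpace ℝ E] [MeasurableSpace E] [Fintype ι]
    (μ : Measure E) (e : ι → E) : Prop :=
  ∀ f : E → ℝ, BddC1 f → (∃ c > 0, ∀ x, c ≤ f x) →
    ∫ x, f x * Real.log (f x) ∂μ - (∫ x, f x ∂μ) * Real.log (∫ x, f x ∂μ)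
      ≤ ∫ x, (∑ i, (fderiv ℝ f x (e i)) ^ 2) / f x ∂μ

/-- Cauchy–Schwarz for the jointly convex function `(p, h) ↦ p² / h`. -/
theorem sq_integral_div_le {Ω : Type*} [MeasurableSpace Ω] {μ : Measure Ω} {p h : Ω → ℝ}
    (hp : Integrable p μ) (hh : Integrable h μ) (hph : Integrable (fun x => p x ^ 2 / h x) μ)
    (hpos : ∀ x, 0 < h x) (hI : 0 < ∫ x, h x ∂μ) :
    (∫ x, p x ∂μ) ^ 2 / ∫ x, h x ∂μ ≤ ∫ x, p x ^ 2 / h x ∂μ := by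
  set P := ∫ x, p x ∂μ with hP
  set R := ∫ x, h x ∂μ with hR
  -- the tangent plane inequality at `(P, R)`
  have key : ∫ x, (2 * P / R * p x - P ^ 2 / R ^ 2 * h x) ∂μ ≤ ∫ x, p x ^ 2 / h x ∂μ := by
    refine integral_mono ((hp.const_mul _).sub (hh.const_mul _)) hph fun x => ?_
    have hx := hpos x
    have : p x ^ 2 / h x - (2 * P / R * p x - P ^ 2 / R ^ 2 * h x)
        = (p x - P / R * h x) ^ 2 / h x := by
      field_simp
      ring
    have h2 : 0 ≤ (p x - P / R * h x) ^ 2 / h x := by positivity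
    change 2 * P / R * p x - P ^ 2 / R ^ 2 * h x ≤ p x ^ 2 / h x
    linarith
  rw [integral_sub (hp.const_mul _) (hh.const_mul _), integral_const_mul, integral_const_mul,
    ← hP, ← hR] at key
  refine le_trans (le_of_eq ?_) key
  field_simp
  ring

theorem le_integral_of_le {Ω : Type*} [MeasurableSpace Ω] {μ : Measure Ω}
    [IsProbabilityMeasure μ] {f : Ω → ℝ} {c : ℝ}
    (hf : Integrable f μ) (hcf : ∀ x, c ≤ f x) : c ≤ ∫ x, f x ∂μ := by
  simpa using integral_mono (μ := μ) (integrable_const c) hf hcf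

section

variable {E F ι κ : Type*} [NormedAddCommGroup E] [NormedSpace ℝ E]
  [NormedAddCommGroup F] [NormedSpace ℝ F] [Fintype ι] [Fintype κ]

theorem BddC1.continuous_fisher {f : E → ℝ} (hf : BddC1 f) {c : ℝ} (hc : 0 < c)
    (hcf : ∀ x, c ≤ f x) (e : ι → E) :
    Continuous fun x => (∑ i, (fderiv ℝ f x (e i)) ^ 2) / f x := by
  refine Continuous.div ?_ hf.continuous fun x => (hc.trans_le (hcf x)).ne'
  exact continuous_finsetSum _ fun i _ => (hf.continuous_fderiv_apply (e i)).pow 2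

theorem BddC1.bdd_fisher {f : E → ℝ} (hf : BddC1 f) {c : ℝ} (hc : 0 < c)
    (hcf : ∀ x, c ≤ f x) (e : ι → E) :
    ∃ C, ∀ x, |(∑ i, (fderiv ℝ f x (e i)) ^ 2) / f x| ≤ C := by
  choose C hC using fun i => hf.bdd_fderiv_apply (e i)
  refine ⟨(∑ i, C i ^ 2) / c, fun x => ?_⟩
  have hx : 0 < f x := hc.trans_le (hcf x)
  rw [abs_of_nonneg (div_nonneg (Finset.sum_nonneg fun i _ => sq_nonneg _) hx.le)]
  refine div_le_div₀ (Finset.sum_nonneg fun i _ => sq_nonneg _) ?_ hc (hcf x)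
  exact Finset.sum_le_sum fun i _ => sq_le_sq' (abs_le.1 (hC i x)).1 (abs_le.1 (hC i x)).2

theorem BddC1.mul_log {f : E → ℝ} (hf : BddC1 f) {c : ℝ} (hc : 0 < c) (hcf : ∀ x, c ≤ f x) :
    BddC1 fun x => f x * Real.log (f x) := hf.mul (hf.log hc hcf)

variable [MeasurableSpace E] [MeasurableSpace F]

theorem LogSob.of_le {μ : Measure E} {e : ι → E} {e' : κ → E} [SecondCountableTopology E]
    [BorelSpace E] [IsProbabilityMeasure μ] (h : LogSob μ e)
    (hle : ∀ l : E →L[ℝ] ℝ, ∑ i, (l (e i)) ^ 2 ≤ ∑ j, (l (e' j)) ^ 2) : LogSob μ e' := by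
  rintro f hf ⟨c, hc, hcf⟩
  refine (h f hf ⟨c, hc, hcf⟩).trans (integral_mono ?_ ?_ fun x => ?_)
  · exact integrable_of_continuous_bdd (hf.continuous_fisher hc hcf e) (hf.bdd_fisher hc hcf e)
  · exact integrable_of_continuous_bdd (hf.continuous_fisher hc hcf e') (hf.bdd_fisher hc hcf e')
  · exact div_le_div_of_nonneg_right (hle _) (hc.trans_le (hcf x)).le

theorem LogSob.dirac [MeasurableSingletonClass E] (x : E) (e : ι → E) :
    LogSob (Measure.dirac x) e := by
  rintro f hf ⟨c, hc, hcf⟩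
  simp only [integral_dirac, sub_self]
  exact div_nonneg (Finset.sum_nonneg fun i _ => sq_nonneg _) (hc.trans_le (hcf x)).le

variable [BorelSpace E] [BorelSpace F]

/-- Push-forward of a logarithmic Sobolev inequality by an affine map. -/
theorem LogSob.map {μ : Measure E} {e : ι → E} (h : LogSob μ e) (A : E →L[ℝ] F) (b : F) :
    LogSob (μ.map fun x => A x + b) (fun i => A (e i)) := by
  rintro f hf ⟨c, hc, hcf⟩
  have hm : AEMeasurable (fun x => A x + b) μ := by fun_prop
  have h1 := h _ (hf.comp_affine A b) ⟨c, hc, fun x => hcf _⟩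
  rw [integral_map hm (hf.mul_log hc hcf).continuous.aestronglyMeasurable,
    integral_map hm hf.continuous.aestronglyMeasurable,
    integral_map hm (hf.continuous_fisher hc hcf _).aestronglyMeasurable]
  simpa only [(hf.hasFDerivAt_comp_affine A b _).fderiv, ContinuousLinearMap.comp_apply] using h1

variable [SecondCountableTopology E] [SecondCountableTopology F]

/-- Tensorization: the entropy of `f` splits into the averaged entropy in the second variable and
the entropy of the average `g(x) = ∫ f(x, z) dν(z)`; the Fisher information of `g` is controlled
by Cauchy–Schwarz. -/
theorem LogSob.prod {μ : Measure E} {ν : Measure F} [IsProbabilityMeasure μ]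
    [IsProbabilityMeasure ν] {e : ι → E} {e' : κ → F} (hμ : LogSob μ e) (hν : LogSob ν e') :
    LogSob (μ.prod ν) (Sum.elim (fun i => (e i, (0 : F))) (fun j => ((0 : E), e' j))) := by
  rintro f hf ⟨c, hc, hcf⟩
  have hpos x : 0 < f x := hc.trans_le (hcf x)
  have hg := hf.average ν
  have hcg (x : E) : c ≤ ∫ z, f (x, z) ∂ν :=
    le_integral_of_le (hf.slice_right x).integrable fun z => hcf _
  have hIe := fun (i : ι) => integrable_of_continuous_bdd (μ := μ.prod ν)
    (hf.continuous_fisher hc hcf (fun _ : Unit => (e i, (0 : F))))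
    (hf.bdd_fisher hc hcf (fun _ : Unit => (e i, (0 : F))))
  have hIe' := integrable_of_continuous_bdd (μ := μ.prod ν)
    (hf.continuous_fisher hc hcf (fun j => ((0 : E), e' j)))
    (hf.bdd_fisher hc hcf (fun j => ((0 : E), e' j)))
  simp only [Finset.univ_unique, Finset.sum_singleton] at hIe
  -- entropy in the second variable
  have h1 : ∫ x, f x * Real.log (f x) ∂(μ.prod ν) ≤
      ∫ x, (∫ z, f (x, z) ∂ν) * Real.log (∫ z, f (x, z) ∂ν) ∂μ
        + ∫ x, (∑ j, (fderiv ℝ f x (0, e' j)) ^ 2) / f x ∂(μ.prod ν) := by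
    rw [integral_prod _ (hf.mul_log hc hcf).integrable, integral_prod _ hIe',
      ← integral_add (hg.mul_log hc hcg).integrable hIe'.integral_prod_left]
    refine integral_mono ((hf.mul_log hc hcf).average ν).integrable
      ((hg.mul_log hc hcg).integrable.add hIe'.integral_prod_left) fun x => ?_
    have := hν _ (hf.slice_right x) ⟨c, hc, fun z => hcf _⟩
    simp only [hf.fderiv_slice_right] at this
    exact sub_le_iff_le_add'.1 this
  -- entropy of the average
  have h2 := hμ _ hg ⟨c, hc, hcg⟩
  have hI2 : ∫ x, ∫ z, f (x, z) ∂ν ∂μ = ∫ x, f x ∂(μ.prod ν) := (integral_prod _ hf.integrable).symm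
  rw [hI2] at h2
  have h3 : ∫ x, (∑ i, (fderiv ℝ (fun x => ∫ z, f (x, z) ∂ν) x (e i)) ^ 2) / (∫ z, f (x, z) ∂ν) ∂μ
      ≤ ∫ x, (∑ i, (fderiv ℝ f x (e i, 0)) ^ 2) / f x ∂(μ.prod ν) := by
    have hsum : ∀ x, (∑ i, (fderiv ℝ f x (e i, 0)) ^ 2) / f x
        = ∑ i, (fderiv ℝ f x (e i, 0)) ^ 2 / f x := fun x => Finset.sum_div _ _ _
    simp only [hsum]
    have hInt : Integrable (fun x => ∑ i, (fderiv ℝ f x (e i, 0)) ^ 2 / f x) (μ.prod ν) :=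
      integrable_finsetSum _ fun i _ => hIe i
    rw [integral_prod _ hInt]
    refine integral_mono (integrable_of_continuous_bdd (hg.continuous_fisher hc hcg e)
      (hg.bdd_fisher hc hcg e)) hInt.integral_prod_left fun x => ?_
    have hx (i : ι) : Integrable (fun z => (fderiv ℝ f (x, z) (e i, 0)) ^ 2 / f (x, z)) ν := by
      have hcx : Continuous fun z : F => (x, z) := by fun_prop
      obtain ⟨C, hC⟩ := hf.bdd_fisher hc hcf (fun _ : Unit => (e i, (0 : F)))
      simp only [Finset.univ_unique, Finset.sum_singleton] at hC
      refine integrable_of_continuous_bdd ?_ ⟨C, fun z => hC (x, z)⟩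
      have := (hf.continuous_fisher hc hcf (fun _ : Unit => (e i, (0 : F)))).comp hcx
      simpa [Function.comp_def] using this
    change _ ≤ ∫ z, ∑ i, (fderiv ℝ f (x, z) (e i, 0)) ^ 2 / f (x, z) ∂ν
    rw [integral_finsetSum _ fun i _ => hx i, Finset.sum_div]
    refine Finset.sum_le_sum fun i _ => ?_
    rw [hf.fderiv_average]
    refine sq_integral_div_le ?_ (hf.slice_right x).integrable (hx i) (fun z => hpos _)
      (hc.trans_le (hcg x))
    obtain ⟨C, hC⟩ := hf.bdd_fderiv_apply (e i, (0 : F))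
    exact integrable_of_continuous_bdd ((hf.continuous_fderiv_apply (e i, (0 : F))).comp
      (by fun_prop : Continuous fun z : F => (x, z))) ⟨C, fun z => hC (x, z)⟩
  have h4 : ∫ x, (∑ i : ι ⊕ κ, (fderiv ℝ f x
      (Sum.elim (fun i => (e i, (0 : F))) (fun j => ((0 : E), e' j)) i)) ^ 2) / f x ∂(μ.prod ν)
      = ∫ x, (∑ i, (fderiv ℝ f x (e i, 0)) ^ 2) / f x ∂(μ.prod ν)
        + ∫ x, (∑ j, (fderiv ℝ f x (0, e' j)) ^ 2) / f x ∂(μ.prod ν) := by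
    rw [← integral_add _ hIe']
    · simp [Fintype.sum_sum_type, add_div]
    · exact integrable_of_continuous_bdd (hf.continuous_fisher hc hcf _) (hf.bdd_fisher hc hcf _)
  rw [h4]
  linarith

end

/-! ### Logarithmic Sobolev inequalities for the cube and the Gaussian -/

/-- The uniform measure on `[0,1]`. -/
abbrev unifMeas : Measure ℝ := volume.restrict (Set.Icc (0 : ℝ) 1)

instance : IsProbabilityMeasure unifMeas := ⟨by simp⟩

/-- In dimension one the oscillation of `f` is at most `∫ |f'|`, hence the `χ²`-divergence, which
dominates the entropy, is at most `(∫ |f'|)² / ∫ f ≤ ∫ f'² / f`. -/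
theorem logSob_unif : LogSob unifMeas (fun _ : Unit => (1 : ℝ)) := by
  rintro f hf ⟨c, hc, hcf⟩
  have hpos x : 0 < f x := hc.trans_le (hcf x)
  have hfi : Integrable f unifMeas := hf.integrable
  set m := ∫ x, f x ∂unifMeas with hm
  have hm0 : 0 < m := hc.trans_le (le_integral_of_le hfi hcf)
  have hdi : Integrable (fun x => |deriv f x|) unifMeas := (hf.integrable_fderiv 1).abs
  set J := ∫ x, |deriv f x| ∂unifMeas with hJ
  have hosc : ∀ x ∈ Set.Icc (0 : ℝ) 1, ∀ y ∈ Set.Icc (0 : ℝ) 1, |f x - f y| ≤ J := by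
    intro x hx y hy
    have hcont : Continuous (deriv f) := hf.continuous_fderiv_apply 1
    have h1 : ∫ s in y..x, deriv f s = f x - f y :=
      intervalIntegral.integral_deriv_eq_sub (fun z _ => hf.differentiable z)
        (hcont.intervalIntegrable _ _)
    rw [← h1]
    refine (intervalIntegral.norm_integral_le_integral_norm_uIoc (f := deriv f)
      (μ := volume)).trans ?_
    refine setIntegral_mono_set hdi (Eventually.of_forall fun z => abs_nonneg _) ?_
    refine LE.le.eventuallyLE ?_
    exact Set.uIoc_subset_uIcc.trans (Set.uIcc_subset_Icc hy hx)
  have hdev : ∀ x ∈ Set.Icc (0 : ℝ) 1, |f x - m| ≤ J := by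
    intro x hx
    have h1 : f x - m = ∫ y, (f x - f y) ∂unifMeas := by
      rw [integral_sub (integrable_const _) hfi]
      simp [hm]
    rw [h1]
    have h2 : ∀ᵐ y ∂unifMeas, ‖f x - f y‖ ≤ J :=
      (ae_restrict_iff' measurableSet_Icc).2 (Eventually.of_forall fun y hy => hosc x hx y hy)
    simpa using norm_integral_le_of_norm_le_const h2
  have hFi := integrable_of_continuous_bdd (μ := unifMeas)
    (hf.continuous_fisher hc hcf (fun _ : Unit => (1 : ℝ)))
    (hf.bdd_fisher hc hcf (fun _ : Unit => (1 : ℝ)))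
  simp only [Finset.univ_unique, Finset.sum_singleton, fderiv_apply_one_eq_deriv] at hFi ⊢
  have hCS : J ^ 2 / m ≤ ∫ x, deriv f x ^ 2 / f x ∂unifMeas := by
    have := sq_integral_div_le (μ := unifMeas) (p := fun x => |deriv f x|) (h := f) hdi hfi
      (by simpa only [sq_abs] using hFi) hpos hm0
    simpa only [sq_abs] using this
  refine le_trans ?_ hCS
  -- `f log (f / m) ≤ f (f / m - 1) = (f - m)² / m + (f - m)`
  have hI2 : Integrable (fun x => f x * Real.log (f x)) unifMeas := (hf.mul_log hc hcf).integrable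
  have hle : ∫ x, (f x * Real.log (f x) - f x * Real.log m) ∂unifMeas
      ≤ ∫ x, (J ^ 2 / m + (f x - m)) ∂unifMeas := by
    refine integral_mono_ae (hI2.sub (hfi.mul_const _))
      ((integrable_const _).add (hfi.sub (integrable_const _))) ?_
    refine (ae_restrict_iff' measurableSet_Icc).2 (Eventually.of_forall fun x hx => ?_)
    have hx0 := hpos x
    have h1 : Real.log (f x) - Real.log m ≤ f x / m - 1 := by
      rw [← Real.log_div hx0.ne' hm0.ne']
      exact Real.log_le_sub_one_of_pos (by positivity)
    have h2 : (f x - m) ^ 2 ≤ J ^ 2 := by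
      have := abs_le.1 (hdev x hx)
      exact sq_le_sq' this.1 this.2
    have h3 : f x * (f x / m - 1) = (f x - m) ^ 2 / m + (f x - m) := by
      field_simp
      ring
    have h4 : (f x - m) ^ 2 / m ≤ J ^ 2 / m := div_le_div_of_nonneg_right h2 hm0.le
    have h5 := mul_le_mul_of_nonneg_left h1 hx0.le
    change f x * Real.log (f x) - f x * Real.log m ≤ J ^ 2 / m + (f x - m)
    linarith
  have hR : ∫ x, (J ^ 2 / m + (f x - m)) ∂unifMeas = J ^ 2 / m := by
    have h1 : Integrable (fun x => f x - m) unifMeas := hfi.sub (integrable_const _)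
    rw [integral_add (integrable_const _) h1, integral_sub hfi (integrable_const _), ← hm]
    simp
  rwa [integral_sub hI2 (hfi.mul_const _), integral_mul_const, hR, ← hm] at hle

/-- A weak limit of measures satisfying a common logarithmic Sobolev inequality satisfies it. -/
theorem LogSob.of_tendsto {ι : Type*} [Fintype ι] {μs : ℕ → ProbabilityMeasure ℝ}
    {μ : ProbabilityMeasure ℝ} {e : ι → ℝ} (h : ∀ᶠ n in atTop, LogSob (μs n : Measure ℝ) e)
    (ht : Tendsto μs atTop (nhds μ)) : LogSob (μ : Measure ℝ) e := by
  rintro f hf ⟨c, hc, hcf⟩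
  rw [ProbabilityMeasure.tendsto_iff_forall_integral_tendsto] at ht
  have key : ∀ g : ℝ → ℝ, Continuous g → (∃ C, ∀ x, |g x| ≤ C) →
      Tendsto (fun n => ∫ x, g x ∂(μs n : Measure ℝ)) atTop (nhds (∫ x, g x ∂(μ : Measure ℝ))) := by
    rintro g hg ⟨C, hC⟩
    exact ht (BoundedContinuousFunction.ofNormedAddCommGroup g hg C hC)
  have h1 := key _ hf.continuous hf.bdd
  have h2 := key _ (hf.mul_log hc hcf).continuous (hf.mul_log hc hcf).bdd
  have h3 := key _ (hf.continuous_fisher hc hcf e) (hf.bdd_fisher hc hcf e)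
  have hm : ∫ x, f x ∂(μ : Measure ℝ) ≠ 0 := (hc.trans_le (le_integral_of_le hf.integrable hcf)).ne'
  refine le_of_tendsto_of_tendsto (h2.sub (h1.mul (h1.log hm))) h3 ?_
  filter_upwards [h] with n hn
  exact hn f hf ⟨c, hc, hcf⟩

/-- The central limit theorem carries the inequality from rescaled sums of independent uniform
variables of variance one over to their Gaussian limit. -/
theorem logSob_gaussian : LogSob (ProbabilityTheory.gaussianReal 0 1) (fun _ : Unit => √12) := by
  -- `ν` is the centred uniform law with variance one
  let A : ℝ →L[ℝ] ℝ := √12 • ContinuousLinearMap.id ℝ ℝ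
  let ν : Measure ℝ := unifMeas.map fun x => A x + (-(√12 / 2))
  have hAm : AEMeasurable (fun x => A x + (-(√12 / 2))) unifMeas := by fun_prop
  have hprob : IsProbabilityMeasure ν := Measure.isProbabilityMeasure_map hAm
  have hν : LogSob ν (fun _ : Unit => √12) := by
    simpa [A, ν] using logSob_unif.map A (-(√12 / 2))
  obtain ⟨Ω, _, P, X, hXm, hXl, hXi, hP⟩ := ProbabilityTheory.exists_iid ℕ ν
  have hsum : ∀ n : ℕ, LogSob (P.map fun ω => ∑ k ∈ Finset.range n, X k ω)
      (fun _ : Unit => √(12 * n)) := by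
    intro n
    induction n with
    | zero =>
      simp only [Finset.range_zero, Finset.sum_empty, Measure.map_const, measure_univ, one_smul]
      exact LogSob.dirac _ _
    | succ n ih =>
      have hSm : Measurable fun ω => ∑ k ∈ Finset.range n, X k ω :=
        Finset.measurable_fun_sum _ fun k _ => hXm k
      have : IsProbabilityMeasure (P.map fun ω => ∑ k ∈ Finset.range n, X k ω) :=
        Measure.isProbabilityMeasure_map hSm.aemeasurable
      have hindep := hXi.indepFun_finsetSum_of_notMem hXm (Finset.notMem_range_self (n := n))
      have hindep' : ProbabilityTheory.IndepFun (fun ω => ∑ k ∈ Finset.range n, X k ω) (X n) P := by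
        convert hindep using 1
        ext ω
        simp
      have hlaw : P.map (fun ω => ∑ k ∈ Finset.range (n + 1), X k ω)
          = ((P.map fun ω => ∑ k ∈ Finset.range n, X k ω).prod ν).map
            (fun x => (ContinuousLinearMap.fst ℝ ℝ ℝ + ContinuousLinearMap.snd ℝ ℝ ℝ) x + 0) := by
        rw [← (hXl n).map_eq, ← (ProbabilityTheory.indepFun_iff_map_prod_eq_prod_map_map
          hSm.aemeasurable (hXm n).aemeasurable).1 hindep',
          Measure.map_map (by fun_prop) (by fun_prop)]
        congr 1
        ext ω
        simp [Finset.sum_range_succ]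
      have hpr : IsProbabilityMeasure (P.map (fun ω => ∑ k ∈ Finset.range (n + 1), X k ω)) :=
        Measure.isProbabilityMeasure_map
          (Finset.measurable_fun_sum _ fun k _ => hXm k).aemeasurable
      have h1 := (ih.prod hν).map (ContinuousLinearMap.fst ℝ ℝ ℝ + ContinuousLinearMap.snd ℝ ℝ ℝ) 0
      rw [← hlaw] at h1
      refine h1.of_le fun l => ?_
      have hl (a : ℝ) : l a = a * l 1 := by
        have := l.map_smul a 1
        simpa using this
      simp only [Fintype.sum_sum_type, Finset.univ_unique, Finset.sum_singleton, Sum.elim_inl,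
        Sum.elim_inr, add_apply, ContinuousLinearMap.coe_fst',
        ContinuousLinearMap.coe_snd', add_zero, zero_add]
      rw [hl, hl (√12), hl (√(12 * ((n + 1 : ℕ) : ℝ))), mul_pow, mul_pow, mul_pow,
        Real.sq_sqrt (by positivity), Real.sq_sqrt (by positivity), Real.sq_sqrt (by positivity)]
      push_cast
      exact le_of_eq (by ring)
  have hid : ∀ i, ProbabilityTheory.IdentDistrib (X i) (X 0) P P := fun i =>
    ⟨(hXm i).aemeasurable, (hXm 0).aemeasurable, by rw [(hXl i).map_eq, (hXl 0).map_eq]⟩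
  have h12 : √12 * √12 = 12 := Real.mul_self_sqrt (by norm_num)
  have h0 : ∫ ω, X 0 ω ∂P = 0 := by
    have : ∫ ω, X 0 ω ∂P = ∫ x, x ∂ν := by
      rw [← (hXl 0).map_eq, integral_map (hXm 0).aemeasurable (by fun_prop)]
    rw [this, integral_map hAm (by fun_prop), integral_Icc_eq_integral_Ioc,
      ← intervalIntegral.integral_of_le zero_le_one]
    have : ∀ x : ℝ, A x + (-(√12 / 2)) = √12 * x + (-(√12 / 2)) := by
      intro x
      simp [A]
    simp only [this]
    rw [intervalIntegral.integral_add (Continuous.intervalIntegrable (by fun_prop) _ _) (by simp),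
      intervalIntegral.integral_const_mul, integral_id]
    simp
    ring
  have h1 : ∫ ω, (X 0 ^ 2) ω ∂P = 1 := by
    have : ∫ ω, (X 0 ^ 2) ω ∂P = ∫ x, x ^ 2 ∂ν := by
      rw [← (hXl 0).map_eq, integral_map (hXm 0).aemeasurable (by fun_prop)]
      rfl
    rw [this, integral_map hAm (by fun_prop), integral_Icc_eq_integral_Ioc,
      ← intervalIntegral.integral_of_le zero_le_one]
    have : ∀ x : ℝ, (A x + (-(√12 / 2))) ^ 2 = 12 * (x ^ 2) - 12 * x + 3 := by
      intro x
      simp only [A, smul_apply, ContinuousLinearMap.id_apply, smul_eq_mul]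
      linear_combination (x ^ 2 - x + 1 / 4) * h12
    simp only [this]
    rw [intervalIntegral.integral_add (Continuous.intervalIntegrable (by fun_prop) _ _) (by simp),
      intervalIntegral.integral_sub (Continuous.intervalIntegrable (by fun_prop) _ _)
        (Continuous.intervalIntegrable (by fun_prop) _ _)]
    rw [intervalIntegral.integral_const_mul, intervalIntegral.integral_const_mul, integral_id,
      integral_pow]
    norm_num
  have hclt := ProbabilityTheory.tendstoInDistribution_inv_sqrt_mul_sum (Y := id)
    (P' := ProbabilityTheory.gaussianReal 0 1) .id h0 h1 hXi hid
  have hlim := LogSob.of_tendsto (e := fun _ : Unit => √12) ?_ hclt.tendsto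
  · simpa using hlim
  filter_upwards [eventually_gt_atTop 0] with n hn
  have hn' : (0 : ℝ) < n := by exact_mod_cast hn
  have h2 := (hsum n).map ((√n)⁻¹ • ContinuousLinearMap.id ℝ ℝ) 0
  rw [Measure.map_map (by fun_prop) (Finset.measurable_fun_sum _ fun k _ => hXm k)] at h2
  convert h2 using 1
  · simp [Function.comp_def]
  · ext
    simp only [smul_apply, ContinuousLinearMap.id_apply, smul_eq_mul]
    rw [Real.sqrt_mul (by norm_num)]
    field_simp

/-- The one-dimensional inequality tensorizes to `ℝᵈ` with the same constant. -/
theorem LogSob.pi {ν : Measure ℝ} [IsProbabilityMeasure ν] {a : ℝ}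
    (h : LogSob ν (fun _ : Unit => a)) (d : ℕ) :
    LogSob (Measure.pi fun _ : Fin d => ν) (fun i => Pi.single i a) := by
  induction d with
  | zero =>
    rw [Measure.pi_of_empty]
    exact LogSob.dirac _ _
  | succ d ih =>
    let A : ℝ × (Fin d → ℝ) →L[ℝ] (Fin (d + 1) → ℝ) :=
      ContinuousLinearMap.pi (Fin.cons (ContinuousLinearMap.fst ℝ ℝ (Fin d → ℝ))
        fun i => (ContinuousLinearMap.proj i).comp (ContinuousLinearMap.snd ℝ ℝ (Fin d → ℝ)))
    have hA (x : ℝ × (Fin d → ℝ)) : A x = Fin.cons x.1 x.2 := by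
      ext i
      refine Fin.cases ?_ (fun j => ?_) i <;> simp [A]
    have hmap : (ν.prod (Measure.pi fun _ : Fin d => ν)).map (fun x => A x + 0)
        = Measure.pi fun _ : Fin (d + 1) => ν := by
      rw [← (measurePreserving_piFinSuccAbove (fun _ : Fin (d + 1) => ν) 0).symm.map_eq]
      congr 1
      ext x
      simp [hA, MeasurableEquiv.piFinSuccAbove_symm_apply, Fin.insertNthEquiv]
    have h1 := (h.prod ih).map A 0
    rw [hmap] at h1
    refine h1.of_le fun l => le_of_eq ?_
    rw [Fintype.sum_sum_type, Fin.sum_univ_succ]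
    simp only [Finset.univ_unique, Finset.sum_singleton, Sum.elim_inl, Sum.elim_inr, hA]
    congr 3
    · ext i
      refine Fin.cases ?_ (fun j => ?_) i <;> simp
    · ext i
      congr 2
      ext j
      refine Fin.cases ?_ (fun j => ?_) j <;> simp [Pi.single_apply]

/-! ### The reference measure on phase space -/

/-- Normalized Lebesgue measure on the torus, carried by the fundamental cube. -/
abbrev cubeMeas (d : ℕ) : Measure (Fin d → ℝ) := Measure.pi fun _ => unifMeas

/-- The standard Gaussian measure on `ℝ^d`. -/
abbrev gaussMeas (d : ℕ) : Measure (Fin d → ℝ) :=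
  Measure.pi fun _ => ProbabilityTheory.gaussianReal 0 1

/-- The probability measure `μ = ℳ(v) dv dx` on phase space. -/
abbrev phaseMeas (d : ℕ) : Measure ((Fin d → ℝ) × (Fin d → ℝ)) :=
  (cubeMeas d).prod (gaussMeas d)

theorem cubeMeas_eq (d : ℕ) : cubeMeas d = volume.restrict (cube d) := by
  rw [cubeMeas, cube, ← Set.pi_univ_Icc, volume_pi, Measure.restrict_pi_pi]
  rfl

theorem gauss_eq_prod (d : ℕ) (v : Fin d → ℝ) :
    gauss d v = ∏ i, ProbabilityTheory.gaussianPDFReal 0 1 (v i) := by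
  simp only [ProbabilityTheory.gaussianPDFReal, Finset.prod_mul_distrib, ← Real.exp_sum, gauss]
  congr 1
  · simp only [NNReal.coe_one, mul_one, Finset.prod_const, Finset.card_univ, Fintype.card_fin]
    rw [Real.sqrt_eq_rpow, ← Real.rpow_neg (by positivity), ← Real.rpow_natCast,
      ← Real.rpow_mul (by positivity)]
    congr 1; ring
  · congr 1
    simp [Finset.sum_div, Finset.sum_neg_distrib, neg_div]

theorem gauss_nonneg (d : ℕ) (v : Fin d → ℝ) : 0 ≤ gauss d v := by
  unfold gauss; positivity

theorem continuous_gauss (d : ℕ) : Continuous (gauss d) := by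
  unfold gauss; fun_prop

theorem integrable_gauss (d : ℕ) : Integrable (gauss d) := by
  have : gauss d = fun v => ∏ i, ProbabilityTheory.gaussianPDFReal 0 1 (v i) :=
    funext (gauss_eq_prod d)
  rw [this]
  exact Integrable.fintype_prod fun _ => ProbabilityTheory.integrable_gaussianPDFReal 0 1

theorem gaussMeas_eq (d : ℕ) :
    gaussMeas d = volume.withDensity fun v => ENNReal.ofReal (gauss d v) := by
  refine Measure.pi_eq fun s hs => ?_
  rw [withDensity_apply _ (MeasurableSet.univ_pi hs), ← ofReal_integral_eq_lintegral_ofReal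
    (integrable_gauss d).restrict (Eventually.of_forall (gauss_nonneg d)), volume_pi,
    Measure.restrict_pi_pi]
  simp_rw [gauss_eq_prod]
  rw [integral_fintype_prod_eq_prod (fun _ => ProbabilityTheory.gaussianPDFReal 0 1),
    ENNReal.ofReal_prod_of_nonneg]
  · simp_rw [ProbabilityTheory.gaussianReal_apply_eq_integral 0 one_ne_zero]
  · exact fun i _ => integral_nonneg (ProbabilityTheory.gaussianPDFReal_nonneg 0 1)

theorem integral_gaussMeas {d : ℕ} (f : (Fin d → ℝ) → ℝ) :
    ∫ v, f v ∂gaussMeas d = ∫ v, f v * gauss d v := by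
  rw [gaussMeas_eq, integral_withDensity_eq_integral_toReal_smul
    (continuous_gauss d).measurable.ennreal_ofReal (by simp)]
  simp [ENNReal.toReal_ofReal (gauss_nonneg d _), mul_comm]

theorem integrable_gaussMeas_iff {d : ℕ} {f : (Fin d → ℝ) → ℝ} :
    Integrable f (gaussMeas d) ↔ Integrable fun v => f v * gauss d v := by
  rw [gaussMeas_eq, integrable_withDensity_iff_integrable_smul'
    (continuous_gauss d).measurable.ennreal_ofReal (by simp)]
  simp [ENNReal.toReal_ofReal (gauss_nonneg d _), mul_comm]

theorem proj_eq {d : ℕ} (f : (Fin d → ℝ) → (Fin d → ℝ) → ℝ) (x : Fin d → ℝ) :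
    proj d f x = ∫ u, f x u ∂gaussMeas d := (integral_gaussMeas _).symm

theorem intMu_eq {d : ℕ} {F : (Fin d → ℝ) → (Fin d → ℝ) → ℝ}
    (hF : Integrable (fun z : (Fin d → ℝ) × (Fin d → ℝ) => F z.1 z.2) (phaseMeas d)) :
    intMu d F = ∫ z, F z.1 z.2 ∂phaseMeas d := by
  rw [integral_prod _ hF, intMu, cubeMeas_eq]
  simp_rw [integral_gaussMeas]

theorem integrable_coord (d : ℕ) (i : Fin d) : Integrable (fun v => v i) (gaussMeas d) := by
  refine integrable_eval (μ := fun _ : Fin d => ProbabilityTheory.gaussianReal 0 1) (i := i) ?_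
  exact (ProbabilityTheory.memLp_id_gaussianReal 1).integrable (by norm_num)

/-- Bounded continuous functions may be multiplied by a velocity coordinate. -/
theorem integrable_coord_mul {d : ℕ} (i : Fin d) {f : (Fin d → ℝ) × (Fin d → ℝ) → ℝ}
    (hf : Continuous f) (hb : ∃ C, ∀ x, |f x| ≤ C) :
    Integrable (fun z => z.2 i * f z) (phaseMeas d) := by
  obtain ⟨C, hC⟩ := hb
  refine Integrable.mul_bdd (c := C) ((integrable_coord d i).comp_snd _)
    hf.aestronglyMeasurable (Eventually.of_forall hC)

theorem hasFDerivAt_gauss (d : ℕ) (v : Fin d → ℝ) :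
    HasFDerivAt (gauss d) (gauss d v • (-∑ i, v i • ContinuousLinearMap.proj (R := ℝ) i)) v := by
  have h1 : HasFDerivAt (fun v : Fin d → ℝ => -(∑ i, v i ^ 2) / 2)
      (-∑ i, v i • ContinuousLinearMap.proj (R := ℝ) (φ := fun _ : Fin d => ℝ) i) v := by
    have h2 : HasFDerivAt (fun v : Fin d → ℝ => ∑ i, v i ^ 2)
        (∑ i, (2 * v i) • ContinuousLinearMap.proj (R := ℝ) (φ := fun _ : Fin d => ℝ) i) v := by
      refine HasFDerivAt.fun_sum fun i _ => ?_
      simpa using (hasFDerivAt_apply (𝕜 := ℝ) (F' := fun _ : Fin d => ℝ) i v).pow 2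
    have h3 := (h2.neg).mul_const (1 / 2 : ℝ)
    refine (h3.congr_fderiv ?_).congr_of_eventuallyEq (Eventually.of_forall fun v => ?_)
    · rw [smul_neg, Finset.smul_sum]
      congr 1
      refine Finset.sum_congr rfl fun i _ => ?_
      rw [smul_smul]; congr 1; ring
    · simp only [Pi.neg_apply]; ring
  have := (h1.exp).const_mul ((2 * Real.pi) ^ (-(d : ℝ) / 2))
  rw [smul_smul] at this
  exact this

/-- Gaussian integration by parts. -/
theorem gaussian_ibp {d : ℕ} {f : (Fin d → ℝ) → ℝ} (hf : BddC1 f) (i : Fin d) :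
    ∫ v, v i * f v ∂gaussMeas d = ∫ v, fderiv ℝ f v (Pi.single i 1) ∂gaussMeas d := by
  have hg v : fderiv ℝ (gauss d) v (Pi.single i 1) = -(v i * gauss d v) := by
    rw [(hasFDerivAt_gauss d v).fderiv]
    simp [Pi.single_apply, mul_comm]
  have hvf : Integrable (fun v => v i * f v) (gaussMeas d) := by
    obtain ⟨C, hC⟩ := hf.bdd
    exact (integrable_coord d i).mul_bdd (c := C) hf.continuous.aestronglyMeasurable
      (Eventually.of_forall hC)
  have key := integral_mul_fderiv_eq_neg_fderiv_mul_of_integrable (μ := volume) (f := f)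
    (g := gauss d) (v := Pi.single i 1)
    (integrable_gaussMeas_iff.1 (hf.integrable_fderiv _))
    (by
      refine (integrable_gaussMeas_iff.1 hvf).neg.congr (Eventually.of_forall fun v => ?_)
      simp only [Pi.neg_apply, hg]; ring)
    (integrable_gaussMeas_iff.1 hf.integrable) (fun x _ => hf.differentiable x)
    (fun x _ => (hasFDerivAt_gauss d x).differentiableAt)
  rw [integral_gaussMeas, integral_gaussMeas, ← neg_eq_iff_eq_neg.2 key, ← integral_neg]
  congr 1 with v
  rw [hg]; ring

/-- A derivative of a periodic function has mean zero over the fundamental cube. -/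
theorem integral_cube_fderiv {d : ℕ} {g : (Fin d → ℝ) → ℝ} (hg : BddC1 g)
    (hper : ∀ (x : Fin d → ℝ) (k : Fin d → ℤ), g (x + fun i => (k i : ℝ)) = g x) (i : Fin d) :
    ∫ x, fderiv ℝ g x (Pi.single i 1) ∂cubeMeas d = 0 := by
  obtain _ | n := d
  · exact i.elim0
  have hsum x : ∑ j, (if j = i then fderiv ℝ g x else 0) (Pi.single j 1)
      = fderiv ℝ g x (Pi.single i 1) := by
    rw [Finset.sum_eq_single i]
    · simp
    · intro j _ hj; simp [hj]
    · simp
  have key := integral_divergence_of_hasFDerivAt_off_countable' (0 : Fin (n + 1) → ℝ) 1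
    zero_le_one (fun j x => if j = i then g x else 0)
    (fun j x => if j = i then fderiv ℝ g x else 0) ∅ Set.countable_empty ?_ ?_ ?_
  · rw [cubeMeas_eq, cube]
    simp_rw [hsum] at key
    rw [key]
    refine Finset.sum_eq_zero fun j _ => ?_
    by_cases hj : j = i
    · subst hj
      simp only [if_true, sub_eq_zero]
      refine integral_congr_ae (Eventually.of_forall fun x => ?_)
      have := hper (j.insertNth 0 x) (Pi.single j 1)
      simp only [Pi.one_apply, Pi.zero_apply]
      rw [← this]
      congr 1
      ext k
      refine Fin.succAboveCases j ?_ (fun l => ?_) k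
      · simp
      · simp
    · simp [hj]
  · intro j
    by_cases hj : j = i
    · simpa [hj] using hg.continuous.continuousOn
    · simpa [hj] using continuousOn_const
  · intro x _ j
    by_cases hj : j = i
    · simpa [hj] using (hg.differentiable x).hasFDerivAt
    · simpa [hj] using hasFDerivAt_const (0 : ℝ) x
  · simp_rw [hsum]
    exact (hg.continuous_fderiv_apply _).continuousOn.integrableOn_compact isCompact_Icc

/-- The transport operator `v · ∇_x` is antisymmetric for `μ`: it annihilates the mean. -/
theorem integral_transport {d : ℕ} {G : (Fin d → ℝ) × (Fin d → ℝ) → ℝ} (hG : BddC1 G)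
    (hper : ∀ (x v : Fin d → ℝ) (k : Fin d → ℤ), G (x + fun i => (k i : ℝ), v) = G (x, v)) :
    ∫ z, fderiv ℝ G z (z.2, 0) ∂phaseMeas d = 0 := by
  have hsum (z : (Fin d → ℝ) × (Fin d → ℝ)) :
      fderiv ℝ G z (z.2, 0) = ∑ i, z.2 i * fderiv ℝ G z (Pi.single i 1, 0) := by
    have : ((z.2, 0) : (Fin d → ℝ) × (Fin d → ℝ)) = ∑ i, z.2 i • (Pi.single i (1 : ℝ), 0) := by
      ext j
      · simp [Prod.fst_sum, Finset.sum_apply, Pi.single_apply]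
      · simp [Prod.snd_sum]
    conv_lhs => rw [this]
    simp only [map_sum, map_smul, smul_eq_mul]
  simp_rw [hsum]
  have hInt i := integrable_coord_mul i (hG.continuous_fderiv_apply (Pi.single i 1, 0))
    (hG.bdd_fderiv_apply _)
  rw [integral_finsetSum _ fun i _ => hInt i]
  refine Finset.sum_eq_zero fun i _ => ?_
  rw [integral_prod_symm _ (hInt i)]
  refine integral_eq_zero_of_ae (Eventually.of_forall fun v => ?_)
  simp only [integral_const_mul, Pi.zero_apply]
  simp_rw [← hG.fderiv_slice_left]
  rw [integral_cube_fderiv _ (fun x k => hper x v k), mul_zero]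
  simpa using hG.comp_affine (ContinuousLinearMap.inl ℝ _ _) (0, v)

/-! ### The solution as a function on space-time -/

/-- `h` as a function of the single variable `(t, x, v)`. -/
def joint {d : ℕ} (h : ℝ → (Fin d → ℝ) → (Fin d → ℝ) → ℝ)
    (q : ℝ × (Fin d → ℝ) × (Fin d → ℝ)) : ℝ := h q.1 q.2.1 q.2.2

/-- The spatial density `Πh`, as a function of `(t, x, v)` that is constant in `v`. -/
def rho {d : ℕ} (h : ℝ → (Fin d → ℝ) → (Fin d → ℝ) → ℝ)
    (q : ℝ × (Fin d → ℝ) × (Fin d → ℝ)) : ℝ := proj d (h q.1) q.2.1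

/-- The unit vector of the coordinate `xᵢ`. -/
def eX {d : ℕ} (i : Fin d) : ℝ × (Fin d → ℝ) × (Fin d → ℝ) := (0, Pi.single i 1, 0)

/-- The unit vector of the coordinate `vᵢ`. -/
def eV {d : ℕ} (i : Fin d) : ℝ × (Fin d → ℝ) × (Fin d → ℝ) := (0, 0, Pi.single i 1)

/-- `∂_{xᵢ} h` on space-time. -/
def dX {d : ℕ} (h : ℝ → (Fin d → ℝ) → (Fin d → ℝ) → ℝ) (i : Fin d)
    (q : ℝ × (Fin d → ℝ) × (Fin d → ℝ)) : ℝ := fderiv ℝ (joint h) q (eX i)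

/-- `∂_{vᵢ} h` on space-time. -/
def dV {d : ℕ} (h : ℝ → (Fin d → ℝ) → (Fin d → ℝ) → ℝ) (i : Fin d)
    (q : ℝ × (Fin d → ℝ) × (Fin d → ℝ)) : ℝ := fderiv ℝ (joint h) q (eV i)

/-- `∂_{xᵢ} Πh` on space-time. -/
def dR {d : ℕ} (h : ℝ → (Fin d → ℝ) → (Fin d → ℝ) → ℝ) (i : Fin d)
    (q : ℝ × (Fin d → ℝ) × (Fin d → ℝ)) : ℝ := fderiv ℝ (rho h) q (eX i)

/-- The material derivative `D = ∂_t + v · ∇_x`. -/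
def mat {d : ℕ} (G : ℝ × (Fin d → ℝ) × (Fin d → ℝ) → ℝ)
    (q : ℝ × (Fin d → ℝ) × (Fin d → ℝ)) : ℝ := fderiv ℝ G q (1, q.2.2, 0)

section

variable {d : ℕ} {h : ℝ → (Fin d → ℝ) → (Fin d → ℝ) → ℝ}

theorem Regular.contDiff_joint (hR : Regular d h) : ContDiff ℝ 2 (joint h) :=
  hR.1.of_le (WithTop.coe_le_coe.2 (le_top : (2 : ℕ∞) ≤ ⊤))

theorem Regular.bddC1_joint (hR : Regular d h) : BddC1 (joint h) := by
  refine ⟨hR.contDiff_joint.of_le (by norm_num), ?_, ?_⟩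
  · obtain ⟨C, hC⟩ := hR.2.2.2 0
    exact ⟨C, fun x => norm_iteratedFDeriv_zero.symm.trans_le (hC x)⟩
  · obtain ⟨C, hC⟩ := hR.2.2.2 1
    exact ⟨C, fun x => (norm_iteratedFDeriv_one _).symm.trans_le (hC x)⟩

theorem Regular.contDiff_fderiv (hR : Regular d h) : ContDiff ℝ 1 (fderiv ℝ (joint h)) :=
  hR.contDiff_joint.fderiv_right (m := 1) (by norm_num)

theorem Regular.differentiable_fderiv (hR : Regular d h) :
    Differentiable ℝ (fderiv ℝ (joint h)) :=
  hR.contDiff_fderiv.differentiable (by norm_num)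

theorem Regular.bddC1_fderiv (hR : Regular d h) (e : ℝ × (Fin d → ℝ) × (Fin d → ℝ)) :
    BddC1 fun q => fderiv ℝ (joint h) q e := by
  refine ⟨hR.contDiff_fderiv.clm_apply contDiff_const, hR.bddC1_joint.bdd_fderiv_apply e, ?_⟩
  obtain ⟨C, hC⟩ := hR.2.2.2 2
  refine ⟨C * ‖e‖, fun q => ContinuousLinearMap.opNorm_le_bound _ ?_ fun w => ?_⟩
  · exact mul_nonneg ((norm_nonneg _).trans (hC q)) (norm_nonneg _)
  have h2 : ‖fderiv ℝ (fderiv ℝ (joint h)) q‖ ≤ C := by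
    have := hC q
    rwa [← norm_iteratedFDeriv_fderiv, norm_iteratedFDeriv_one] at this
  rw [fderiv_clm_apply (hR.differentiable_fderiv q) (differentiableAt_const e)]
  simp only [fderiv_fun_const, Pi.zero_apply, ContinuousLinearMap.comp_zero, zero_add,
    ContinuousLinearMap.flip_apply]
  refine (((fderiv ℝ (fderiv ℝ (joint h)) q) w).le_opNorm e).trans ?_
  have := ((fderiv ℝ (fderiv ℝ (joint h)) q)).le_opNorm w
  calc _ ≤ ‖fderiv ℝ (fderiv ℝ (joint h)) q‖ * ‖w‖ * ‖e‖ := by gcongr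
    _ ≤ C * ‖w‖ * ‖e‖ := by gcongr
    _ = C * ‖e‖ * ‖w‖ := by ring

theorem Regular.bddC1_dX (hR : Regular d h) (i : Fin d) : BddC1 (dX h i) := hR.bddC1_fderiv _

theorem Regular.bddC1_dV (hR : Regular d h) (i : Fin d) : BddC1 (dV h i) := hR.bddC1_fderiv _

theorem Regular.gradx_eq (hR : Regular d h) (t : ℝ) (x v : Fin d → ℝ) (i : Fin d) :
    gradx d (h t) x v i = dX h i (t, x, v) := by
  rw [dX, eX, ← hR.bddC1_joint.fderiv_slice_right t (x, v),
    ← (hR.bddC1_joint.slice_right t).fderiv_slice_left x _ v]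
  rfl

theorem Regular.gradv_eq (hR : Regular d h) (t : ℝ) (x v : Fin d → ℝ) (i : Fin d) :
    gradv d (h t) x v i = dV h i (t, x, v) := by
  rw [dV, eV, ← hR.bddC1_joint.fderiv_slice_right t (x, v),
    ← (hR.bddC1_joint.slice_right t).fderiv_slice_right x v _]
  rfl

theorem vec_eq_sum (v : Fin d → ℝ) :
    ((0, v, 0) : ℝ × (Fin d → ℝ) × (Fin d → ℝ)) = ∑ i, v i • eX i := by
  ext j
  · simp [Prod.fst_sum, eX]
  · simp [Prod.fst_sum, Prod.snd_sum, Finset.sum_apply, Pi.single_apply, eX]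
  · simp [Prod.snd_sum, eX]

theorem mat_eq (G : ℝ × (Fin d → ℝ) × (Fin d → ℝ) → ℝ) (q) :
    mat G q = fderiv ℝ G q (1, 0, 0) + ∑ i, q.2.2 i * fderiv ℝ G q (eX i) := by
  have : ((1, q.2.2, 0) : ℝ × (Fin d → ℝ) × (Fin d → ℝ)) = (1, 0, 0) + (0, q.2.2, 0) := by simp
  rw [mat, this, map_add, vec_eq_sum, map_sum]
  simp only [map_smul, smul_eq_mul]

/-! ### The spatial density -/

/-- Reordering of variables that exhibits `Πh` as an average over the last factor. -/
def reorder (d : ℕ) :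
    ((ℝ × (Fin d → ℝ) × (Fin d → ℝ)) × (Fin d → ℝ)) →L[ℝ] ℝ × (Fin d → ℝ) × (Fin d → ℝ) :=
  ((ContinuousLinearMap.fst ℝ _ _).comp (ContinuousLinearMap.fst ℝ _ _)).prod
    ((((ContinuousLinearMap.fst ℝ _ _).comp (ContinuousLinearMap.snd ℝ _ _)).comp
      (ContinuousLinearMap.fst ℝ _ _)).prod (ContinuousLinearMap.snd ℝ _ _))

theorem reorder_apply (q : ℝ × (Fin d → ℝ) × (Fin d → ℝ)) (u : Fin d → ℝ) :
    reorder d (q, u) = (q.1, q.2.1, u) := rfl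

theorem rho_eq (q : ℝ × (Fin d → ℝ) × (Fin d → ℝ)) :
    rho h q = ∫ u, joint h (reorder d (q, u)) ∂gaussMeas d := proj_eq _ _

theorem rho_congr (t : ℝ) (x v w : Fin d → ℝ) : rho h (t, x, v) = rho h (t, x, w) := rfl

theorem Regular.bddC1_rho (hR : Regular d h) : BddC1 (rho h) := by
  have : rho h = fun q => ∫ u, joint h (reorder d (q, u)) ∂gaussMeas d := funext rho_eq
  rw [this]
  exact (hR.bddC1_joint.comp_clm (reorder d)).average (gaussMeas d)

theorem Regular.fderiv_rho (hR : Regular d h) (q e) :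
    fderiv ℝ (rho h) q e =
      ∫ u, fderiv ℝ (joint h) (q.1, q.2.1, u) (e.1, e.2.1, 0) ∂gaussMeas d := by
  have : rho h = fun q => ∫ u, joint h (reorder d (q, u)) ∂gaussMeas d := funext rho_eq
  rw [this, (hR.bddC1_joint.comp_clm (reorder d)).fderiv_average (gaussMeas d)]
  congr 1 with u
  have := (hR.bddC1_joint.hasFDerivAt_comp_affine (reorder d) 0 (q, u)).fderiv
  simp only [add_zero] at this
  rw [this]
  rfl

theorem Regular.dR_eq (hR : Regular d h) (i : Fin d) (q) :
    dR h i q = ∫ u, dX h i (q.1, q.2.1, u) ∂gaussMeas d := hR.fderiv_rho q (eX i)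

theorem Regular.dR_congr (hR : Regular d h) (i : Fin d) (t : ℝ) (x v w : Fin d → ℝ) :
    dR h i (t, x, v) = dR h i (t, x, w) := by
  rw [hR.dR_eq, hR.dR_eq]

theorem Regular.fderiv_rho_eV (hR : Regular d h) (i : Fin d) (q) :
    fderiv ℝ (rho h) q (eV i) = 0 := by
  rw [hR.fderiv_rho]
  exact integral_eq_zero_of_ae (Eventually.of_forall fun u => map_zero _)

theorem Regular.le_rho (hR : Regular d h) {c : ℝ} (hc : ∀ q, c ≤ joint h q) (q) :
    c ≤ rho h q := by
  rw [rho_eq]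
  refine le_integral_of_le ?_ fun u => hc _
  exact ((hR.bddC1_joint.comp_clm (reorder d)).slice_right q).integrable

theorem Regular.exists_lower (hR : Regular d h) : ∃ c > 0, ∀ q, c ≤ joint h q := by
  obtain ⟨c, C, hc, hb⟩ := hR.2.2.1
  exact ⟨c, hc, fun q => (hb _ _ _).1⟩

/-! ### Evolution of the derivatives -/

theorem SolvesLRB.mat_joint {lam : ℝ} (hS : SolvesLRB d lam h) (hR : Regular d h)
    (q : ℝ × (Fin d → ℝ) × (Fin d → ℝ)) (hq : 0 ≤ q.1) :
    mat (joint h) q = lam * (rho h q - joint h q) := by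
  rw [mat_eq]
  have := hS q.1 q.2.1 q.2.2 hq
  rw [dotp] at this
  simp only [hR.gradx_eq] at this
  refine Eq.trans ?_ this
  congr 1
  rw [← fderiv_apply_one_eq_deriv]
  refine Eq.trans ?_ (hR.bddC1_joint.fderiv_slice_left q.1 1 q.2).symm
  rfl

/-- The commutator of `D` with a constant vector field `e` is the `x`-derivative along the
velocity component of `e`. -/
theorem Regular.hasFDerivAt_mat (hR : Regular d h) (q e : ℝ × (Fin d → ℝ) × (Fin d → ℝ)) :
    DifferentiableAt ℝ (mat (joint h)) q ∧ fderiv ℝ (mat (joint h)) q e =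
      mat (fun r => fderiv ℝ (joint h) r e) q + fderiv ℝ (joint h) q (0, e.2.2, 0) := by
  let A : (ℝ × (Fin d → ℝ) × (Fin d → ℝ)) →L[ℝ] ℝ × (Fin d → ℝ) × (Fin d → ℝ) :=
    (ContinuousLinearMap.inr ℝ _ _).comp ((ContinuousLinearMap.inl ℝ _ _).comp
      ((ContinuousLinearMap.snd ℝ _ _).comp (ContinuousLinearMap.snd ℝ _ _)))
  have hw : HasFDerivAt (fun r : ℝ × (Fin d → ℝ) × (Fin d → ℝ) =>
      ((1, r.2.2, 0) : ℝ × (Fin d → ℝ) × (Fin d → ℝ))) A q := by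
    have := (A.hasFDerivAt (x := q)).add_const ((1, 0, 0) : ℝ × (Fin d → ℝ) × (Fin d → ℝ))
    refine this.congr_of_eventuallyEq (Eventually.of_forall fun r => ?_)
    simp [A]
  have hmain := (hR.differentiable_fderiv q).hasFDerivAt.clm_apply hw
  refine ⟨hmain.differentiableAt, ?_⟩
  have hsymm : IsSymmSndFDerivAt ℝ (joint h) q :=
    hR.contDiff_joint.contDiffAt.isSymmSndFDerivAt (by simp)
  have : fderiv ℝ (mat (joint h)) q = _ := hmain.fderiv
  rw [this, mat, fderiv_clm_apply (hR.differentiable_fderiv q) (differentiableAt_const e)]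
  simp only [fderiv_fun_const, Pi.zero_apply, ContinuousLinearMap.comp_zero, zero_add,
    ContinuousLinearMap.flip_apply, add_apply, ContinuousLinearMap.comp_apply]
  rw [hsymm.eq e, add_comm]
  rfl

/-- The equation may be differentiated in any direction tangent to the time slices. -/
theorem SolvesLRB.mat_fderiv {lam : ℝ} (hS : SolvesLRB d lam h) (hR : Regular d h)
    (q e : ℝ × (Fin d → ℝ) × (Fin d → ℝ)) (hq : 0 ≤ q.1) (he : e.1 = 0) :
    mat (fun r => fderiv ℝ (joint h) r e) q =
      lam * (fderiv ℝ (rho h) q e - fderiv ℝ (joint h) q e)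
        - fderiv ℝ (joint h) q (0, e.2.2, 0) := by
  obtain ⟨hd, hf⟩ := hR.hasFDerivAt_mat q e
  have hline : HasDerivAt (fun s : ℝ => q + s • e) e 0 := by
    simpa using ((hasDerivAt_id (0 : ℝ)).smul_const e).const_add q
  have hcomp {G : ℝ × (Fin d → ℝ) × (Fin d → ℝ) → ℝ} (hG : DifferentiableAt ℝ G q) :
      HasDerivAt (fun s : ℝ => G (q + s • e)) (fderiv ℝ G q e) 0 := by
    have hG' : HasFDerivAt G (fderiv ℝ G q) (q + (0 : ℝ) • e) := by simpa using hG.hasFDerivAt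
    exact hG'.comp_hasDerivAt (0 : ℝ) hline
  have h1 := hcomp hd
  have h2 := ((hcomp (hR.bddC1_rho.differentiable q)).sub
    (hcomp (hR.bddC1_joint.differentiable q))).const_mul lam
  have heq : (fun s : ℝ => mat (joint h) (q + s • e)) =
      fun s : ℝ => lam * (rho h (q + s • e) - joint h (q + s • e)) := by
    funext s
    exact hS.mat_joint hR _ (by simpa [he] using hq)
  rw [heq] at h1
  have := h1.unique h2
  linarith

theorem SolvesLRB.mat_dX {lam : ℝ} (hS : SolvesLRB d lam h) (hR : Regular d h)
    (q : ℝ × (Fin d → ℝ) × (Fin d → ℝ)) (hq : 0 ≤ q.1) (i : Fin d) :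
    mat (dX h i) q = lam * (dR h i q - dX h i q) := by
  have := hS.mat_fderiv hR q (eX i) hq rfl
  have h0 : ((0, (eX i).2.2, 0) : ℝ × (Fin d → ℝ) × (Fin d → ℝ)) = 0 := rfl
  rw [h0, map_zero, sub_zero] at this
  exact this

theorem SolvesLRB.mat_dV {lam : ℝ} (hS : SolvesLRB d lam h) (hR : Regular d h)
    (q : ℝ × (Fin d → ℝ) × (Fin d → ℝ)) (hq : 0 ≤ q.1) (i : Fin d) :
    mat (dV h i) q = -lam * dV h i q - dX h i q := by
  have := hS.mat_fderiv hR q (eV i) hq rfl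
  rw [hR.fderiv_rho_eV] at this
  refine this.trans ?_
  simp only [dV, dX, eX, eV]; ring

/-! ### Periodicity -/

theorem Regular.joint_periodic (hR : Regular d h) (q) (k : Fin d → ℤ) :
    joint h (q + (0, (fun i => (k i : ℝ)), 0)) = joint h q := by
  simpa [joint] using hR.2.1 q.1 q.2.1 q.2.2 k

theorem Regular.rho_periodic (hR : Regular d h) (q) (k : Fin d → ℤ) :
    rho h (q + (0, (fun i => (k i : ℝ)), 0)) = rho h q := by
  simp only [rho, proj, Prod.fst_add, Prod.snd_add, add_zero]
  congr 1 with u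
  rw [hR.2.1 q.1 q.2.1 u k]

theorem fderiv_periodic {G : ℝ × (Fin d → ℝ) × (Fin d → ℝ) → ℝ} {w}
    (hG : ∀ q, G (q + w) = G q) (q) : fderiv ℝ G (q + w) = fderiv ℝ G q := by
  rw [← fderiv_comp_add_right w]
  congr 1
  funext r
  exact hG r

theorem Regular.dX_periodic (hR : Regular d h) (i : Fin d) (q) (k : Fin d → ℤ) :
    dX h i (q + (0, (fun i => (k i : ℝ)), 0)) = dX h i q := by
  rw [dX, fderiv_periodic (fun q => hR.joint_periodic q k)]; rfl

theorem Regular.dV_periodic (hR : Regular d h) (i : Fin d) (q) (k : Fin d → ℤ) :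
    dV h i (q + (0, (fun i => (k i : ℝ)), 0)) = dV h i q := by
  rw [dV, fderiv_periodic (fun q => hR.joint_periodic q k)]; rfl

end

/-! ### Averages of material derivatives -/

section

variable {d : ℕ}

theorem continuous_mat {G : ℝ × (Fin d → ℝ) × (Fin d → ℝ) → ℝ} (hG : BddC1 G) :
    Continuous (mat G) :=
  hG.continuous_fderiv.clm_apply (by fun_prop)

theorem integrable_coord_mul_slice {f : ℝ × (Fin d → ℝ) × (Fin d → ℝ) → ℝ}
    (hf : Continuous f) (hb : ∃ C, ∀ q, |f q| ≤ C) (t : ℝ) (i : Fin d) :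
    Integrable (fun z : (Fin d → ℝ) × (Fin d → ℝ) => z.2 i * f (t, z)) (phaseMeas d) := by
  obtain ⟨C, hC⟩ := hb
  exact integrable_coord_mul i (f := fun z => f (t, z)) (hf.comp (by fun_prop)) ⟨C, fun z => hC _⟩

theorem integrable_slice {f : ℝ × (Fin d → ℝ) × (Fin d → ℝ) → ℝ}
    (hf : Continuous f) (hb : ∃ C, ∀ q, |f q| ≤ C) (t : ℝ) :
    Integrable (fun z : (Fin d → ℝ) × (Fin d → ℝ) => f (t, z)) (phaseMeas d) := by
  obtain ⟨C, hC⟩ := hb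
  exact integrable_of_continuous_bdd (hf.comp (by fun_prop)) ⟨C, fun z => hC _⟩

theorem BddC1.integrable_mat {G : ℝ × (Fin d → ℝ) × (Fin d → ℝ) → ℝ} (hG : BddC1 G) (t : ℝ) :
    Integrable (fun z => mat G (t, z)) (phaseMeas d) := by
  simp_rw [mat_eq]
  refine (integrable_slice (hG.continuous_fderiv_apply _) (hG.bdd_fderiv_apply _) t).add ?_
  refine integrable_finsetSum _ fun i _ => ?_
  exact integrable_coord_mul_slice (hG.continuous_fderiv_apply _) (hG.bdd_fderiv_apply _) t i

/-- Transport does not contribute to the mean of a material derivative. -/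
theorem BddC1.integral_mat {G : ℝ × (Fin d → ℝ) × (Fin d → ℝ) → ℝ} (hG : BddC1 G)
    (hper : ∀ q (k : Fin d → ℤ), G (q + (0, (fun i => (k i : ℝ)), 0)) = G q) (t : ℝ) :
    ∫ z, mat G (t, z) ∂phaseMeas d = ∫ z, fderiv ℝ G (t, z) (1, 0, 0) ∂phaseMeas d := by
  have h1 := integral_transport (hG.slice_right t) (fun x v k => by
    simpa using hper (t, x, v) k)
  simp_rw [hG.fderiv_slice_right] at h1
  have h2 := integrable_slice (hG.continuous_fderiv_apply (1, 0, 0)) (hG.bdd_fderiv_apply _) t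
  have h3 (z : (Fin d → ℝ) × (Fin d → ℝ)) :
      fderiv ℝ G (t, z) (0, z.2, 0) = mat G (t, z) - fderiv ℝ G (t, z) (1, 0, 0) := by
    rw [mat, ← map_sub]; simp
  simp_rw [h3] at h1
  rw [integral_sub (hG.integrable_mat t) h2] at h1
  linarith

theorem BddC1.hasDerivAt_integral {G : ℝ × (Fin d → ℝ) × (Fin d → ℝ) → ℝ} (hG : BddC1 G)
    (hper : ∀ q (k : Fin d → ℤ), G (q + (0, (fun i => (k i : ℝ)), 0)) = G q) (t : ℝ) :
    HasDerivAt (fun s => ∫ z, G (s, z) ∂phaseMeas d) (∫ z, mat G (t, z) ∂phaseMeas d) t := by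
  rw [hG.integral_mat hper]
  refine (hG.hasFDerivAt_average (phaseMeas d) t).differentiableAt.hasDerivAt.congr_deriv ?_
  rw [← fderiv_apply_one_eq_deriv]
  exact hG.fderiv_average (phaseMeas d) t 1

/-- `f` is integrable with mean zero on phase space. -/
def NullMean (f : (Fin d → ℝ) × (Fin d → ℝ) → ℝ) : Prop :=
  Integrable f (phaseMeas d) ∧ ∫ z, f z ∂phaseMeas d = 0

theorem NullMean.add {f g : (Fin d → ℝ) × (Fin d → ℝ) → ℝ} (hf : NullMean f) (hg : NullMean g) :
    NullMean fun z => f z + g z :=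
  ⟨hf.1.add hg.1, by rw [integral_add hf.1 hg.1, hf.2, hg.2, add_zero]⟩

theorem NullMean.sub {f g : (Fin d → ℝ) × (Fin d → ℝ) → ℝ} (hf : NullMean f) (hg : NullMean g) :
    NullMean fun z => f z - g z :=
  ⟨hf.1.sub hg.1, by rw [integral_sub hf.1 hg.1, hf.2, hg.2, sub_zero]⟩

theorem NullMean.const_mul {f : (Fin d → ℝ) × (Fin d → ℝ) → ℝ} (hf : NullMean f) (c : ℝ) :
    NullMean fun z => c * f z :=
  ⟨hf.1.const_mul c, by rw [integral_const_mul, hf.2, mul_zero]⟩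

theorem NullMean.sum {f : Fin d → (Fin d → ℝ) × (Fin d → ℝ) → ℝ} (hf : ∀ i, NullMean (f i)) :
    NullMean fun z => ∑ i, f i z :=
  ⟨integrable_finsetSum _ fun i _ => (hf i).1, by
    rw [integral_finsetSum _ fun i _ => (hf i).1]
    exact Finset.sum_eq_zero fun i _ => (hf i).2⟩

/-- A function whose velocity averages vanish is orthogonal to functions of `x` alone. -/
theorem integral_mul_eq_zero {w f : (Fin d → ℝ) × (Fin d → ℝ) → ℝ} (hw : Continuous w)
    (hwb : ∃ C, ∀ z, |w z| ≤ C) (hwc : ∀ x v, w (x, v) = w (x, 0))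
    (hf : Integrable f (phaseMeas d)) (hf0 : ∀ x, ∫ v, f (x, v) ∂gaussMeas d = 0) :
    NullMean fun z => w z * f z := by
  obtain ⟨C, hC⟩ := hwb
  have hi : Integrable (fun z => w z * f z) (phaseMeas d) :=
    hf.bdd_mul (c := C) hw.aestronglyMeasurable (Eventually.of_forall hC)
  refine ⟨hi, ?_⟩
  rw [integral_prod _ hi]
  refine integral_eq_zero_of_ae (Eventually.of_forall fun x => ?_)
  simp_rw [hwc x, integral_const_mul, hf0, mul_zero]
  rfl

theorem mat_add {F G : ℝ × (Fin d → ℝ) × (Fin d → ℝ) → ℝ} (hF : BddC1 F) (hG : BddC1 G) (q) :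
    mat (fun r => F r + G r) q = mat F q + mat G q := by
  simp [mat, fderiv_fun_add (hF.differentiable q) (hG.differentiable q)]

theorem mat_mul {F G : ℝ × (Fin d → ℝ) × (Fin d → ℝ) → ℝ} (hF : BddC1 F) (hG : BddC1 G) (q) :
    mat (fun r => F r * G r) q = F q * mat G q + G q * mat F q := by
  simp [mat, fderiv_fun_mul (hF.differentiable q) (hG.differentiable q)]

theorem mat_const (c : ℝ) (q : ℝ × (Fin d → ℝ) × (Fin d → ℝ)) : mat (fun _ => c) q = 0 := by
  simp [mat]

theorem mat_sum {F : Fin d → ℝ × (Fin d → ℝ) × (Fin d → ℝ) → ℝ} (hF : ∀ i, BddC1 (F i)) (q) :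
    mat (fun r => ∑ i, F i r) q = ∑ i, mat (F i) q := by
  simp [mat, fderiv_fun_sum fun i _ => (hF i).differentiable q]

theorem mat_inv {F : ℝ × (Fin d → ℝ) × (Fin d → ℝ) → ℝ} (hF : BddC1 F) (q) (hq : 0 < F q) :
    mat (fun r => (F r)⁻¹) q = -mat F q / F q ^ 2 := by
  rw [mat, (hF.fderiv_inv hq).fderiv]
  simp [mat]; ring

theorem mat_log {F : ℝ × (Fin d → ℝ) × (Fin d → ℝ) → ℝ} (hF : BddC1 F) (q) (hq : 0 < F q) :
    mat (fun r => Real.log (F r)) q = mat F q / F q := by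
  rw [mat, fderiv.log (hF.differentiable q) hq.ne']
  simp [mat]; ring

end

/-! ### Dissipation of the modified Fisher information -/

/-- The quadratic form `a|p|² + 2 p·q + 2|q|²` of the modified Fisher information,
one coordinate at a time. -/
def quad (a p q : ℝ) : ℝ := a * p ^ 2 + 2 * (p * q) + 2 * q ^ 2

/-- The coefficient of `|∇_x h|²/h` in the modified Fisher information. It is chosen so that
`(2 + λ)² ≤ a λ²`. -/
def aC (lam : ℝ) : ℝ := 2 + (2 + lam) ^ 2 / lam ^ 2

/-- The coefficient of the projected entropy in the Lyapunov functional. -/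
def bC (lam : ℝ) : ℝ := 2 * (2 + lam)

/-- The algebraic core: with `p = h x`, `q = h y`, `P = ρ z`, the difference of the two sides is
`-λρ (a (x - z)² + 2 (x - z) y + 2 y²) - h (aλ (x - z)² + 2 (λ + 2) (x - z) y + λ y²)`,
a sum of two nonpositive quadratic forms. -/
theorem dissipation_pointwise {lam p q P r H : ℝ} (hlam : 0 < lam) (hr : 0 < r) (hH : 0 < H) :
    (2 * aC lam * p * (lam * (P - p)) + 2 * (lam * (P - p) * q + p * (-lam * q - p))
        + 4 * q * (-lam * q - p)) / H - quad (aC lam) p q * (lam * (r - H)) / H ^ 2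
      + bC lam * (q * P / r) + lam * aC lam * (2 * p * P / r - H * P ^ 2 / r ^ 2 - P ^ 2 / r)
      ≤ -((2 * p ^ 2 + lam * q ^ 2) / H) := by
  obtain ⟨x, rfl⟩ : ∃ x, p = H * x := ⟨p / H, by field_simp⟩
  obtain ⟨y, rfl⟩ : ∃ y, q = H * y := ⟨q / H, by field_simp⟩
  obtain ⟨z, rfl⟩ : ∃ z, P = r * z := ⟨P / r, by field_simp⟩
  have ha : lam ^ 2 * aC lam = 2 * lam ^ 2 + (2 + lam) ^ 2 := by
    unfold aC; field_simp
  have ha2 : 2 ≤ aC lam := by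
    unfold aC; linarith [show 0 ≤ (2 + lam) ^ 2 / lam ^ 2 by positivity]
  generalize aC lam = a at *
  have hid : (2 * a * (H * x) * (lam * (r * z - H * x))
        + 2 * (lam * (r * z - H * x) * (H * y) + H * x * (-lam * (H * y) - H * x))
        + 4 * (H * y) * (-lam * (H * y) - H * x)) / H
        - quad a (H * x) (H * y) * (lam * (r - H)) / H ^ 2
      + bC lam * (H * y * (r * z) / r)
      + lam * a * (2 * (H * x) * (r * z) / r - H * (r * z) ^ 2 / r ^ 2 - (r * z) ^ 2 / r)
      + (2 * (H * x) ^ 2 + lam * (H * y) ^ 2) / H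
      = -(lam * r * (a * (x - z) ^ 2 + 2 * (x - z) * y + 2 * y ^ 2))
        - H * (a * lam * (x - z) ^ 2 + 2 * (lam + 2) * (x - z) * y + lam * y ^ 2) := by
    unfold quad bC; field_simp; ring
  have h1 : 0 ≤ a * (x - z) ^ 2 + 2 * (x - z) * y + 2 * y ^ 2 := by
    nlinarith [sq_nonneg (x - z + y), sq_nonneg (x - z), sq_nonneg y]
  have h2 : 0 ≤ a * lam * (x - z) ^ 2 + 2 * (lam + 2) * (x - z) * y + lam * y ^ 2 := by
    have : 0 ≤ lam * (a * lam * (x - z) ^ 2 + 2 * (lam + 2) * (x - z) * y + lam * y ^ 2) := by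
      have e : lam * (a * lam * (x - z) ^ 2 + 2 * (lam + 2) * (x - z) * y + lam * y ^ 2)
        = 2 * lam ^ 2 * (x - z) ^ 2 + ((2 + lam) * (x - z) + lam * y) ^ 2 := by
        linear_combination (x - z) ^ 2 * ha
      rw [e]; positivity
    exact nonneg_of_mul_nonneg_right this hlam
  have h3 := mul_nonneg (mul_nonneg hlam.le hr.le) h1
  have h4 := mul_nonneg hH.le h2
  linarith

theorem quad_lower {a p q : ℝ} (ha : 2 ≤ a) : p ^ 2 + q ^ 2 ≤ quad a p q := by
  unfold quad; nlinarith [sq_nonneg (p + q), sq_nonneg p]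

theorem quad_upper {a p q : ℝ} : quad a p q ≤ (a + 1) * p ^ 2 + 3 * q ^ 2 := by
  unfold quad; nlinarith [sq_nonneg (p - q)]

theorem two_le_aC (lam : ℝ) : 2 ≤ aC lam := by
  unfold aC; linarith [show 0 ≤ (2 + lam) ^ 2 / lam ^ 2 by positivity]

/-! ### The Lyapunov density -/

section

variable {d : ℕ} {h : ℝ → (Fin d → ℝ) → (Fin d → ℝ) → ℝ}

/-- The density `Q(∇_x h, ∇_v h)/h + β h log Πh`, whose mean is the Lyapunov functional. Using
`h log Πh` instead of `Πh log Πh`, which has the same mean, simplifies its material derivative. -/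
def lyap (lam : ℝ) (h : ℝ → (Fin d → ℝ) → (Fin d → ℝ) → ℝ)
    (q : ℝ × (Fin d → ℝ) × (Fin d → ℝ)) : ℝ :=
  (∑ i, quad (aC lam) (dX h i q) (dV h i q)) * (joint h q)⁻¹
    + bC lam * (joint h q * Real.log (rho h q))

theorem Regular.bddC1_quad (hR : Regular d h) (a : ℝ) (i : Fin d) :
    BddC1 fun q => quad a (dX h i q) (dV h i q) := by
  unfold quad
  simp only [pow_two]
  have hp := hR.bddC1_dX i
  have hq := hR.bddC1_dV i
  exact (((BddC1.const a).mul (hp.mul hp)).add ((BddC1.const 2).mul (hp.mul hq))).add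
    ((BddC1.const 2).mul (hq.mul hq))

theorem Regular.bddC1_lyap (hR : Regular d h) (lam : ℝ) : BddC1 (lyap lam h) := by
  obtain ⟨c, hc, hcq⟩ := hR.exists_lower
  unfold lyap
  exact ((BddC1.sum _ fun i => hR.bddC1_quad _ i).mul (hR.bddC1_joint.inv hc hcq)).add
    ((BddC1.const _).mul (hR.bddC1_joint.mul (hR.bddC1_rho.log hc (hR.le_rho hcq))))

theorem Regular.lyap_periodic (hR : Regular d h) (lam : ℝ) (q) (k : Fin d → ℤ) :
    lyap lam h (q + (0, (fun i => (k i : ℝ)), 0)) = lyap lam h q := by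
  simp only [lyap, hR.dX_periodic, hR.dV_periodic, hR.joint_periodic, hR.rho_periodic]

theorem Regular.mat_quad (hR : Regular d h) (a : ℝ) (i : Fin d) (q) :
    mat (fun q => quad a (dX h i q) (dV h i q)) q =
      2 * a * dX h i q * mat (dX h i) q
        + 2 * (mat (dX h i) q * dV h i q + dX h i q * mat (dV h i) q)
        + 4 * dV h i q * mat (dV h i) q := by
  have hp := hR.bddC1_dX i
  have hq := hR.bddC1_dV i
  unfold quad
  simp only [pow_two]
  rw [mat_add (((BddC1.const a).mul (hp.mul hp)).add ((BddC1.const 2).mul (hp.mul hq)))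
    ((BddC1.const 2).mul (hq.mul hq)), mat_add ((BddC1.const a).mul (hp.mul hp))
    ((BddC1.const 2).mul (hp.mul hq)), mat_mul (BddC1.const a) (hp.mul hp),
    mat_mul (BddC1.const 2) (hp.mul hq), mat_mul (BddC1.const 2) (hq.mul hq), mat_mul hp hp,
    mat_mul hp hq, mat_mul hq hq, mat_const, mat_const]
  ring

/-- The terms of the material derivative of the density that average to zero. -/
def nullTerm (lam : ℝ) (h : ℝ → (Fin d → ℝ) → (Fin d → ℝ) → ℝ)
    (q : ℝ × (Fin d → ℝ) × (Fin d → ℝ)) : ℝ :=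
  bC lam * (lam * (Real.log (rho h q) * (rho h q - joint h q))
      - fderiv ℝ (rho h) q (1, 0, 0) / rho h q * (rho h q - joint h q)
      + fderiv ℝ (rho h) q (1, 0, 0)
      + ∑ i, dR h i q / rho h q * (q.2.2 i * joint h q - dV h i q))
    - lam * aC lam * ∑ i, (2 * (dR h i q / rho h q * (dX h i q - dR h i q))
      + (dR h i q / rho h q) ^ 2 * (rho h q - joint h q))

/-- Pointwise form of the dissipation: once the terms of zero mean are removed, the material
derivative of the Lyapunov density is a sum over the coordinates of the expressions estimated in
`dissipation_pointwise`. -/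
theorem SolvesLRB.mat_lyap_le {lam : ℝ} (hlam : 0 < lam) (hS : SolvesLRB d lam h)
    (hR : Regular d h) (q : ℝ × (Fin d → ℝ) × (Fin d → ℝ)) (hq : 0 ≤ q.1) :
    mat (lyap lam h) q - nullTerm lam h q ≤
      -∑ i, (2 * dX h i q ^ 2 + lam * dV h i q ^ 2) / joint h q := by
  obtain ⟨c, hc, hcq⟩ := hR.exists_lower
  have hH : 0 < joint h q := hc.trans_le (hcq q)
  have hr : 0 < rho h q := hc.trans_le (hR.le_rho hcq q)
  have hsum := BddC1.sum Finset.univ fun i => hR.bddC1_quad (aC lam) i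
  have hlog := hR.bddC1_rho.log hc (hR.le_rho hcq)
  have hHl := hR.bddC1_joint.mul hlog
  have hinv := hR.bddC1_joint.inv hc hcq
  have hm : mat (lyap lam h) q =
      (∑ i, quad (aC lam) (dX h i q) (dV h i q)) * (-mat (joint h) q / joint h q ^ 2)
        + (joint h q)⁻¹ * ∑ i, mat (fun q => quad (aC lam) (dX h i q) (dV h i q)) q
        + bC lam * (joint h q * (mat (rho h) q / rho h q)
          + Real.log (rho h q) * mat (joint h) q) := by
    unfold lyap
    rw [mat_add (hsum.mul hinv) ((BddC1.const _).mul hHl), mat_mul hsum hinv,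
      mat_mul (BddC1.const _) hHl, mat_mul hR.bddC1_joint hlog, mat_const,
      mat_inv hR.bddC1_joint q hH, mat_log hR.bddC1_rho q hr,
      mat_sum fun i => hR.bddC1_quad (aC lam) i]
    ring
  have hρ : mat (rho h) q = fderiv ℝ (rho h) q (1, 0, 0) + ∑ i, q.2.2 i * dR h i q := mat_eq _ _
  have hkey : mat (lyap lam h) q - nullTerm lam h q = ∑ i,
      ((2 * aC lam * dX h i q * (lam * (dR h i q - dX h i q))
        + 2 * (lam * (dR h i q - dX h i q) * dV h i q
          + dX h i q * (-lam * dV h i q - dX h i q))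
        + 4 * dV h i q * (-lam * dV h i q - dX h i q)) / joint h q
        - quad (aC lam) (dX h i q) (dV h i q) * (lam * (rho h q - joint h q)) / joint h q ^ 2
        + bC lam * (dV h i q * dR h i q / rho h q)
        + lam * aC lam * (2 * dX h i q * dR h i q / rho h q
          - joint h q * dR h i q ^ 2 / rho h q ^ 2 - dR h i q ^ 2 / rho h q)) := by
    rw [hm, nullTerm, hρ, hS.mat_joint hR q hq]
    simp only [hR.mat_quad, hS.mat_dX hR q hq, hS.mat_dV hR q hq]
    have split (A B C D : Fin d → ℝ) (H k β l : ℝ) :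
        ∑ i, (A i / H - B i * k / H ^ 2 + β * C i + l * D i) =
          (∑ i, A i) / H - (∑ i, B i) * k / H ^ 2 + β * ∑ i, C i + l * ∑ i, D i := by
      simp only [Finset.sum_add_distrib, Finset.sum_sub_distrib, Finset.sum_div, Finset.mul_sum,
        Finset.sum_mul]
    rw [split]
    have e1 : ∑ i, dR h i q / rho h q * (q.2.2 i * joint h q - dV h i q) =
        joint h q * ((∑ i, q.2.2 i * dR h i q) / rho h q)
          - ∑ i, dV h i q * dR h i q / rho h q := by
      rw [Finset.sum_div, Finset.mul_sum, ← Finset.sum_sub_distrib]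
      exact Finset.sum_congr rfl fun i _ => by ring
    have e2 : ∑ i, (2 * (dR h i q / rho h q * (dX h i q - dR h i q))
          + (dR h i q / rho h q) ^ 2 * (rho h q - joint h q)) =
        ∑ i, (2 * dX h i q * dR h i q / rho h q
          - joint h q * dR h i q ^ 2 / rho h q ^ 2 - dR h i q ^ 2 / rho h q) := by
      exact Finset.sum_congr rfl fun i _ => by field_simp; ring
    rw [e1, e2]
    generalize ∑ i, dV h i q * dR h i q / rho h q = S
    generalize ∑ i, (2 * dX h i q * dR h i q / rho h q
      - joint h q * dR h i q ^ 2 / rho h q ^ 2 - dR h i q ^ 2 / rho h q) = T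
    generalize ∑ i, q.2.2 i * dR h i q = U
    field_simp
    ring_nf
  rw [hkey, ← Finset.sum_neg_distrib]
  exact Finset.sum_le_sum fun i _ => dissipation_pointwise hlam hr hH

theorem Regular.continuous_dR (hR : Regular d h) (i : Fin d) : Continuous (dR h i) :=
  hR.bddC1_rho.continuous_fderiv_apply _

theorem bdd_mul {α : Type*} {f g : α → ℝ} (hf : ∃ C, ∀ q, |f q| ≤ C) (hg : ∃ C, ∀ q, |g q| ≤ C) :
    ∃ C, ∀ q, |f q * g q| ≤ C := by
  obtain ⟨A, hA⟩ := hf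
  obtain ⟨B, hB⟩ := hg
  refine ⟨A * B, fun q => ?_⟩
  rw [abs_mul]
  exact mul_le_mul (hA q) (hB q) (abs_nonneg _) ((abs_nonneg _).trans (hA q))

/-- The collision operator has zero velocity average, hence is orthogonal to functions of `x`. -/
theorem Regular.integral_mul_collision (hR : Regular d h)
    {w : ℝ × (Fin d → ℝ) × (Fin d → ℝ) → ℝ} (hw : Continuous w) (hwb : ∃ C, ∀ q, |w q| ≤ C)
    (hwc : ∀ t x v, w (t, x, v) = w (t, x, 0)) (t : ℝ) :
    NullMean fun z => w (t, z) * (rho h (t, z) - joint h (t, z)) := by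
  obtain ⟨C, hC⟩ := hwb
  refine integral_mul_eq_zero (w := fun z => w (t, z)) (hw.comp (by fun_prop)) ⟨C, fun z => hC _⟩
    (fun x v => hwc t x v) ?_ fun x => ?_
  · exact (hR.bddC1_rho.slice_right t).integrable.sub (hR.bddC1_joint.slice_right t).integrable
  · have h1 : Integrable (fun v => rho h (t, x, v)) (gaussMeas d) :=
      ((hR.bddC1_rho.slice_right t).slice_right x).integrable
    have h2 : Integrable (fun v => joint h (t, x, v)) (gaussMeas d) :=
      ((hR.bddC1_joint.slice_right t).slice_right x).integrable
    rw [integral_sub h1 h2]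
    have : ∫ v, rho h (t, x, v) ∂gaussMeas d = rho h (t, x, 0) := by
      simp [fun v => rho_congr (h := h) t x v 0]
    rw [this, rho_eq]
    exact sub_self _

theorem Regular.integral_mul_dX (hR : Regular d h) (i : Fin d)
    {w : ℝ × (Fin d → ℝ) × (Fin d → ℝ) → ℝ} (hw : Continuous w) (hwb : ∃ C, ∀ q, |w q| ≤ C)
    (hwc : ∀ t x v, w (t, x, v) = w (t, x, 0)) (t : ℝ) :
    NullMean fun z => w (t, z) * (dX h i (t, z) - dR h i (t, z)) := by
  obtain ⟨C, hC⟩ := hwb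
  refine integral_mul_eq_zero (w := fun z => w (t, z)) (hw.comp (by fun_prop)) ⟨C, fun z => hC _⟩
    (fun x v => hwc t x v) ?_ fun x => ?_
  · exact ((hR.bddC1_dX i).slice_right t).integrable.sub
      (integrable_slice (hR.continuous_dR i) (hR.bddC1_rho.bdd_fderiv_apply _) t)
  · have h2 : Integrable (fun v => dX h i (t, x, v)) (gaussMeas d) :=
      (((hR.bddC1_dX i).slice_right t).slice_right x).integrable
    simp_rw [fun v => hR.dR_congr i t x v 0]
    rw [integral_sub h2 (integrable_const _), integral_const, hR.dR_eq]
    simp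

/-- The Gaussian integration by parts turns the flux `∫ v h ℳ` into `∫ ∇_v h ℳ`. -/
theorem Regular.integral_mul_flux (hR : Regular d h) (i : Fin d)
    {w : ℝ × (Fin d → ℝ) × (Fin d → ℝ) → ℝ} (hw : Continuous w) (hwb : ∃ C, ∀ q, |w q| ≤ C)
    (hwc : ∀ t x v, w (t, x, v) = w (t, x, 0)) (t : ℝ) :
    NullMean fun z => w (t, z) * (z.2 i * joint h (t, z) - dV h i (t, z)) := by
  obtain ⟨C, hC⟩ := hwb
  refine integral_mul_eq_zero (w := fun z => w (t, z)) (hw.comp (by fun_prop)) ⟨C, fun z => hC _⟩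
    (fun x v => hwc t x v) ?_ fun x => ?_
  · exact (integrable_coord_mul_slice hR.bddC1_joint.continuous hR.bddC1_joint.bdd t i).sub
      ((hR.bddC1_dV i).slice_right t).integrable
  · have hs := (hR.bddC1_joint.slice_right t).slice_right x
    have h1 : Integrable (fun v => v i * joint h (t, x, v)) (gaussMeas d) := by
      obtain ⟨C, hC⟩ := hs.bdd
      exact (integrable_coord d i).mul_bdd (c := C) hs.continuous.aestronglyMeasurable
        (Eventually.of_forall hC)
    have h2 : Integrable (fun v => dV h i (t, x, v)) (gaussMeas d) :=
      (((hR.bddC1_dV i).slice_right t).slice_right x).integrable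
    rw [integral_sub h1 h2, gaussian_ibp hs, sub_eq_zero]
    congr 1 with v
    rw [(hR.bddC1_joint.slice_right t).fderiv_slice_right, hR.bddC1_joint.fderiv_slice_right]
    rfl

/-- Conservation of mass. -/
theorem SolvesLRB.integral_dt_rho {lam : ℝ} (hS : SolvesLRB d lam h) (hR : Regular d h)
    {t : ℝ} (ht : 0 ≤ t) :
    ∫ z, fderiv ℝ (rho h) (t, z) (1, 0, 0) ∂phaseMeas d = 0 := by
  have h1 := hR.bddC1_joint.integral_mat hR.joint_periodic t
  have h2 : ∫ z, mat (joint h) (t, z) ∂phaseMeas d = 0 := by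
    simp_rw [fun z => hS.mat_joint hR (t, z) ht]
    exact (hR.integral_mul_collision (w := fun _ => lam) continuous_const ⟨_, fun _ => le_rfl⟩
      (fun _ _ _ => rfl) t).2
  rw [h2] at h1
  rw [integral_prod _ (integrable_slice (hR.bddC1_joint.continuous_fderiv_apply (1, 0, 0))
    (hR.bddC1_joint.bdd_fderiv_apply _) t)] at h1
  rw [integral_prod _ (integrable_slice (hR.bddC1_rho.continuous_fderiv_apply (1, 0, 0))
    (hR.bddC1_rho.bdd_fderiv_apply _) t), h1]
  congr 1 with x
  simp_rw [hR.fderiv_rho]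
  simp

theorem SolvesLRB.integral_nullTerm {lam : ℝ} (hS : SolvesLRB d lam h) (hR : Regular d h)
    {t : ℝ} (ht : 0 ≤ t) :
    NullMean fun z => nullTerm lam h (t, z) := by
  obtain ⟨c, hc, hcq⟩ := hR.exists_lower
  have hr q : rho h q ≠ 0 := (hc.trans_le (hR.le_rho hcq q)).ne'
  have hlog := hR.bddC1_rho.log hc (hR.le_rho hcq)
  have hinv := hR.bddC1_rho.inv hc (hR.le_rho hcq)
  have hdiv e : Continuous (fun q => fderiv ℝ (rho h) q e / rho h q) :=
    (hR.bddC1_rho.continuous_fderiv_apply e).div hR.bddC1_rho.continuous hr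
  have hdivb e : ∃ C, ∀ q, |fderiv ℝ (rho h) q e / rho h q| ≤ C := by
    simpa only [div_eq_mul_inv] using bdd_mul (hR.bddC1_rho.bdd_fderiv_apply e) hinv.bdd
  have hdtc t x v : fderiv ℝ (rho h) (t, x, v) (1, 0, 0) / rho h (t, x, v)
      = fderiv ℝ (rho h) (t, x, 0) (1, 0, 0) / rho h (t, x, 0) := by
    rw [hR.fderiv_rho, hR.fderiv_rho, rho_congr t x v 0]
  have hdRc i t x v : dR h i (t, x, v) / rho h (t, x, v) = dR h i (t, x, 0) / rho h (t, x, 0) := by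
    rw [hR.dR_congr i t x v 0, rho_congr t x v 0]
  have n1 := hR.integral_mul_collision (w := fun q => Real.log (rho h q)) hlog.continuous
    hlog.bdd (fun t x v => by rw [rho_congr t x v 0]) t
  have n2 := hR.integral_mul_collision
    (w := fun q => fderiv ℝ (rho h) q (1, 0, 0) / rho h q) (hdiv _) (hdivb _) hdtc t
  have n3 : NullMean fun z => fderiv ℝ (rho h) (t, z) (1, 0, 0) :=
    ⟨integrable_slice (hR.bddC1_rho.continuous_fderiv_apply (1, 0, 0))
      (hR.bddC1_rho.bdd_fderiv_apply _) t, hS.integral_dt_rho hR ht⟩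
  have n4 i := hR.integral_mul_flux i (w := fun q => dR h i q / rho h q) (hdiv _) (hdivb _)
    (hdRc i) t
  have n5 i := hR.integral_mul_dX i (w := fun q => dR h i q / rho h q) (hdiv _) (hdivb _)
    (hdRc i) t
  have n6 i := hR.integral_mul_collision (w := fun q => (dR h i q / rho h q) ^ 2)
    ((hdiv _).pow 2) (by simp only [pow_two]; exact bdd_mul (hdivb (eX i)) (hdivb (eX i)))
    (fun t x v => by rw [hdRc]) t
  exact (((((n1.const_mul lam).sub n2).add n3).add (NullMean.sum n4)).const_mul (bC lam)).sub
    ((NullMean.sum fun i => ((n5 i).const_mul 2).add (n6 i)).const_mul (lam * aC lam))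

end

/-! ### Entropies, Fisher information and decay -/

section

variable {d : ℕ} {h : ℝ → (Fin d → ℝ) → (Fin d → ℝ) → ℝ}

/-- The `x`-part `∫ |∇_x h_t|²/h_t dμ` of the Fisher information. -/
def fisherX (h : ℝ → (Fin d → ℝ) → (Fin d → ℝ) → ℝ) (t : ℝ) : ℝ :=
  ∫ z, (∑ i, dX h i (t, z) ^ 2) / joint h (t, z) ∂phaseMeas d

/-- The `v`-part `∫ |∇_v h_t|²/h_t dμ` of the Fisher information. -/
def fisherV (h : ℝ → (Fin d → ℝ) → (Fin d → ℝ) → ℝ) (t : ℝ) : ℝ :=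
  ∫ z, (∑ i, dV h i (t, z) ^ 2) / joint h (t, z) ∂phaseMeas d

theorem Regular.integrable_fisher (hR : Regular d h)
    {e : Fin d → ℝ × (Fin d → ℝ) × (Fin d → ℝ)} (t : ℝ) :
    Integrable (fun z => (∑ i, fderiv ℝ (joint h) (t, z) (e i) ^ 2) / joint h (t, z))
      (phaseMeas d) := by
  obtain ⟨c, hc, hcq⟩ := hR.exists_lower
  exact integrable_slice (hR.bddC1_joint.continuous_fisher hc hcq e)
    (hR.bddC1_joint.bdd_fisher hc hcq e) t

theorem Regular.integrable_fisherX (hR : Regular d h) (t : ℝ) :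
    Integrable (fun z => (∑ i, dX h i (t, z) ^ 2) / joint h (t, z)) (phaseMeas d) :=
  hR.integrable_fisher t

theorem Regular.integrable_fisherV (hR : Regular d h) (t : ℝ) :
    Integrable (fun z => (∑ i, dV h i (t, z) ^ 2) / joint h (t, z)) (phaseMeas d) :=
  hR.integrable_fisher t

theorem Regular.fisherX_nonneg (hR : Regular d h) (t : ℝ) : 0 ≤ fisherX h t := by
  obtain ⟨c, hc, hcq⟩ := hR.exists_lower
  exact integral_nonneg fun z => div_nonneg (Finset.sum_nonneg fun i _ => sq_nonneg _)
    (hc.trans_le (hcq _)).le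

theorem Regular.fisherV_nonneg (hR : Regular d h) (t : ℝ) : 0 ≤ fisherV h t := by
  obtain ⟨c, hc, hcq⟩ := hR.exists_lower
  exact integral_nonneg fun z => div_nonneg (Finset.sum_nonneg fun i _ => sq_nonneg _)
    (hc.trans_le (hcq _)).le

theorem Regular.Ifull_eq (hR : Regular d h) (t : ℝ) :
    Ifull d (h t) = fisherX h t + fisherV h t := by
  have e : (fun z : (Fin d → ℝ) × (Fin d → ℝ) =>
      (nsq d (gradx d (h t) z.1 z.2) + nsq d (gradv d (h t) z.1 z.2)) / h t z.1 z.2) =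
      fun z => (∑ i, dX h i (t, z) ^ 2) / joint h (t, z)
        + (∑ i, dV h i (t, z) ^ 2) / joint h (t, z) := by
    funext z
    simp only [nsq, hR.gradx_eq, hR.gradv_eq, add_div]
    rfl
  have hi := (hR.integrable_fisherX t).add (hR.integrable_fisherV t)
  rw [Ifull, intMu_eq (by rw [e]; exact hi), e]
  exact integral_add (hR.integrable_fisherX t) (hR.integrable_fisherV t)

theorem Regular.integral_joint (hR : Regular d h) {t : ℝ} (hm : intMu d (h t) = 1) :
    ∫ z, joint h (t, z) ∂phaseMeas d = 1 := by
  rw [← hm, intMu_eq]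
  · rfl
  · exact (hR.bddC1_joint.slice_right t).integrable

theorem Regular.integral_rho (hR : Regular d h) {t : ℝ} (hm : intMu d (h t) = 1) :
    ∫ x, rho h (t, x, 0) ∂cubeMeas d = 1 := by
  rw [← hR.integral_joint hm, integral_prod _ (hR.bddC1_joint.slice_right t).integrable]
  congr 1 with x
  exact rho_eq _

theorem Regular.bddC1_rho_slice (hR : Regular d h) (t : ℝ) :
    BddC1 fun x => rho h (t, x, 0) := by
  simpa using (hR.bddC1_rho.slice_right t).comp_affine
    (ContinuousLinearMap.inl ℝ (Fin d → ℝ) (Fin d → ℝ)) (0, 0)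

theorem HPi_eq (t : ℝ) :
    HPi d (h t) = ∫ x, rho h (t, x, 0) * Real.log (rho h (t, x, 0)) ∂cubeMeas d := by
  rw [cubeMeas_eq]; rfl

/-- Jensen's inequality for the projected entropy. -/
theorem Regular.HPi_nonneg (hR : Regular d h) {t : ℝ} (hm : intMu d (h t) = 1) :
    0 ≤ HPi d (h t) := by
  obtain ⟨c, hc, hcq⟩ := hR.exists_lower
  have hρ := hR.bddC1_rho_slice t
  have hcρ (x : Fin d → ℝ) : c ≤ rho h (t, x, 0) := hR.le_rho hcq _
  have h1 : ∫ x, (rho h (t, x, 0) - 1) ∂cubeMeas d ≤ HPi d (h t) := by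
    rw [HPi_eq]
    refine integral_mono (hρ.integrable.sub (integrable_const _)) (hρ.mul_log hc hcρ).integrable
      fun x => ?_
    have hx : 0 < rho h (t, x, 0) := hc.trans_le (hcρ x)
    have := Real.one_sub_inv_le_log_of_pos hx
    calc rho h (t, x, 0) - 1 = rho h (t, x, 0) * (1 - (rho h (t, x, 0))⁻¹) := by
          field_simp
      _ ≤ _ := mul_le_mul_of_nonneg_left this hx.le
  rw [integral_sub hρ.integrable (integrable_const _), hR.integral_rho hm] at h1
  simpa using h1

/-- The logarithmic Sobolev inequality on the torus, followed by Cauchy–Schwarz in `v`. -/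
theorem Regular.HPi_le_fisherX (hR : Regular d h) {t : ℝ} (hm : intMu d (h t) = 1) :
    HPi d (h t) ≤ fisherX h t := by
  obtain ⟨c, hc, hcq⟩ := hR.exists_lower
  have hρ := hR.bddC1_rho_slice t
  have hcρ (x : Fin d → ℝ) : c ≤ rho h (t, x, 0) := hR.le_rho hcq _
  have h1 := (LogSob.pi logSob_unif d) _ hρ ⟨c, hc, hcρ⟩
  change ∫ x, _ ∂cubeMeas d - (∫ x, rho h (t, x, 0) ∂cubeMeas d)
    * Real.log (∫ x, rho h (t, x, 0) ∂cubeMeas d) ≤ _ at h1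
  rw [hR.integral_rho hm, ← HPi_eq, Real.log_one, mul_zero, sub_zero] at h1
  refine h1.trans ?_
  have hF := hR.integrable_fisherX t
  rw [fisherX, integral_prod _ hF]
  refine integral_mono (integrable_of_continuous_bdd (hρ.continuous_fisher hc hcρ _)
    (hρ.bdd_fisher hc hcρ _)) hF.integral_prod_left fun x => ?_
  have hd (i : Fin d) : fderiv ℝ (fun x => rho h (t, x, 0)) x (Pi.single i 1)
      = dR h i (t, x, 0) := by
    rw [(hR.bddC1_rho.slice_right t).fderiv_slice_left, hR.bddC1_rho.fderiv_slice_right]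
    rfl
  simp only [hd, Finset.sum_div]
  have hH := (hR.bddC1_joint.slice_right t).slice_right x
  have hX (i : Fin d) := ((hR.bddC1_dX i).slice_right t).slice_right x
  have hi (i : Fin d) : Integrable (fun v => dX h i (t, x, v) ^ 2 / joint h (t, x, v))
      (gaussMeas d) := by
    simp only [pow_two]
    exact (((hX i).mul (hX i)).div hH hc fun v => hcq _).integrable
  rw [integral_finsetSum _ fun i _ => hi i]
  refine Finset.sum_le_sum fun i _ => ?_
  have hr : rho h (t, x, 0) = ∫ v, joint h (t, x, v) ∂gaussMeas d := rho_eq _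
  rw [hR.dR_eq, hr]
  refine sq_integral_div_le (hX i).integrable hH.integrable (hi i)
    (fun v => hc.trans_le (hcq _)) ?_
  rw [← hr]
  exact hc.trans_le (hcρ x)

/-- The logarithmic Sobolev inequality on phase space. -/
theorem Regular.Hent_le (hR : Regular d h) {t : ℝ} (hm : intMu d (h t) = 1) :
    Hent d (h t) ≤ 12 * Ifull d (h t) := by
  obtain ⟨c, hc, hcq⟩ := hR.exists_lower
  have hJ := hR.bddC1_joint.slice_right t
  have h1 := ((LogSob.pi logSob_unif d).prod (LogSob.pi logSob_gaussian d)) _ hJ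
    ⟨c, hc, fun z => hcq _⟩
  change ∫ z, _ ∂phaseMeas d - (∫ z, joint h (t, z) ∂phaseMeas d)
    * Real.log (∫ z, joint h (t, z) ∂phaseMeas d) ≤ _ at h1
  rw [hR.integral_joint hm, Real.log_one, mul_zero, sub_zero] at h1
  have h2 : Hent d (h t) = ∫ z, joint h (t, z) * Real.log (joint h (t, z)) ∂phaseMeas d :=
    intMu_eq (hJ.mul_log hc fun z => hcq _).integrable
  rw [h2]
  refine h1.trans ?_
  rw [hR.Ifull_eq, fisherX, fisherV, ← integral_add (hR.integrable_fisherX t)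
    (hR.integrable_fisherV t), ← integral_const_mul]
  refine integral_mono (integrable_of_continuous_bdd (hJ.continuous_fisher hc (fun z => hcq _) _)
    (hJ.bdd_fisher hc (fun z => hcq _) _))
    (((hR.integrable_fisherX t).add (hR.integrable_fisherV t)).const_mul 12) fun z => ?_
  have hX (i : Fin d) : fderiv ℝ (fun z => joint h (t, z)) z (Pi.single i 1, 0)
      = dX h i (t, z) := hR.bddC1_joint.fderiv_slice_right t z _
  have hV (i : Fin d) : fderiv ℝ (fun z => joint h (t, z)) z (0, Pi.single i √12)
      = √12 * dV h i (t, z) := by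
    have : ((0, Pi.single i √12) : (Fin d → ℝ) × (Fin d → ℝ)) = √12 • (0, Pi.single i 1) := by
      simp [Prod.smul_mk, ← Pi.single_smul']
    rw [this, map_smul, hR.bddC1_joint.fderiv_slice_right]
    rfl
  simp only [Fintype.sum_sum_type, Sum.elim_inl, Sum.elim_inr, hX, hV, mul_pow]
  rw [← Finset.mul_sum, Real.sq_sqrt (by norm_num), ← add_div, ← mul_div_assoc]
  refine div_le_div_of_nonneg_right ?_ (hc.trans_le (hcq _)).le
  have : 0 ≤ ∑ i, dX h i (t, z) ^ 2 := Finset.sum_nonneg fun i _ => sq_nonneg _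
  linarith

/-- The Lyapunov functional `∫ Q(∇_x h, ∇_v h)/h dμ + β H_Π(h)` at time `t`. -/
def energy (lam : ℝ) (h : ℝ → (Fin d → ℝ) → (Fin d → ℝ) → ℝ) (t : ℝ) : ℝ :=
  ∫ z, lyap lam h (t, z) ∂phaseMeas d

theorem Regular.energy_eq (hR : Regular d h) (lam t : ℝ) :
    energy lam h t =
      ∫ z, (∑ i, quad (aC lam) (dX h i (t, z)) (dV h i (t, z))) * (joint h (t, z))⁻¹ ∂phaseMeas d
        + bC lam * HPi d (h t) := by
  obtain ⟨c, hc, hcq⟩ := hR.exists_lower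
  have hlog := hR.bddC1_rho.log hc (hR.le_rho hcq)
  have i1 := (((BddC1.sum Finset.univ fun i => hR.bddC1_quad (aC lam) i).mul
    (hR.bddC1_joint.inv hc hcq)).slice_right t).integrable (μ := phaseMeas d)
  have i2 := ((hR.bddC1_joint.mul hlog).slice_right t).integrable (μ := phaseMeas d)
  have i3 := ((hR.bddC1_rho.mul hlog).slice_right t).integrable (μ := phaseMeas d)
  unfold energy lyap
  rw [integral_add i1 (i2.const_mul _), integral_const_mul]
  congr 2
  have n1 := (hR.integral_mul_collision (w := fun q => Real.log (rho h q)) hlog.continuous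
    hlog.bdd (fun t x v => by rw [rho_congr t x v 0]) t).2
  have e : (fun z => Real.log (rho h (t, z)) * (rho h (t, z) - joint h (t, z))) =
      fun z => rho h (t, z) * Real.log (rho h (t, z))
        - joint h (t, z) * Real.log (rho h (t, z)) := by
    funext z; ring
  rw [e, integral_sub i3 i2, sub_eq_zero] at n1
  rw [← n1, HPi_eq, integral_prod _ i3]
  congr 1 with x
  simp [fun v => rho_congr (h := h) t x v 0]

theorem Regular.energy_lower (hR : Regular d h) {lam : ℝ} (t : ℝ) :
    Ifull d (h t) + bC lam * HPi d (h t) ≤ energy lam h t := by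
  obtain ⟨c, hc, hcq⟩ := hR.exists_lower
  have i1 := (((BddC1.sum Finset.univ fun i => hR.bddC1_quad (aC lam) i).mul
    (hR.bddC1_joint.inv hc hcq)).slice_right t).integrable (μ := phaseMeas d)
  rw [hR.energy_eq, hR.Ifull_eq, fisherX, fisherV, ← integral_add (hR.integrable_fisherX t)
    (hR.integrable_fisherV t)]
  gcongr ?_ + _
  refine integral_mono ((hR.integrable_fisherX t).add (hR.integrable_fisherV t)) i1 fun z => ?_
  simp only [← add_div, ← Finset.sum_add_distrib, ← div_eq_mul_inv]
  exact div_le_div_of_nonneg_right (Finset.sum_le_sum fun i _ => quad_lower (two_le_aC lam))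
    (hc.trans_le (hcq _)).le

theorem Regular.energy_upper (hR : Regular d h) {lam : ℝ} (t : ℝ) :
    energy lam h t ≤ (aC lam + 1) * fisherX h t + 3 * fisherV h t + bC lam * HPi d (h t) := by
  obtain ⟨c, hc, hcq⟩ := hR.exists_lower
  have i1 := (((BddC1.sum Finset.univ fun i => hR.bddC1_quad (aC lam) i).mul
    (hR.bddC1_joint.inv hc hcq)).slice_right t).integrable (μ := phaseMeas d)
  have hX := (hR.integrable_fisherX t).const_mul (aC lam + 1)
  have hV := (hR.integrable_fisherV t).const_mul 3
  rw [hR.energy_eq, fisherX, fisherV, ← integral_const_mul, ← integral_const_mul,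
    ← integral_add hX hV]
  gcongr ?_ + _
  refine integral_mono i1 (hX.add hV) fun z => ?_
  simp only [← mul_div_assoc, ← add_div, Finset.mul_sum, ← Finset.sum_add_distrib, ← div_eq_mul_inv]
  exact div_le_div_of_nonneg_right (Finset.sum_le_sum fun i _ => quad_upper)
    (hc.trans_le (hcq _)).le

/-- The energy dissipation inequality `E' ≤ -(2 I^X + λ I^V)`. -/
theorem SolvesLRB.energy_deriv {lam : ℝ} (hlam : 0 < lam) (hS : SolvesLRB d lam h)
    (hR : Regular d h) {t : ℝ} (ht : 0 ≤ t) :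
    ∃ E', HasDerivAt (energy lam h) E' t ∧ E' ≤ -(2 * fisherX h t + lam * fisherV h t) := by
  have hl := hR.bddC1_lyap lam
  refine ⟨_, hl.hasDerivAt_integral (hR.lyap_periodic lam) t, ?_⟩
  have hn := hS.integral_nullTerm hR ht
  have hi := hl.integrable_mat t
  have hX := (hR.integrable_fisherX t).const_mul 2
  have hV := (hR.integrable_fisherV t).const_mul lam
  calc ∫ z, mat (lyap lam h) (t, z) ∂phaseMeas d
      = ∫ z, (mat (lyap lam h) (t, z) - nullTerm lam h (t, z)) ∂phaseMeas d := by
        rw [integral_sub hi hn.1, hn.2, sub_zero]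
    _ ≤ ∫ z, -(2 * ((∑ i, dX h i (t, z) ^ 2) / joint h (t, z))
          + lam * ((∑ i, dV h i (t, z) ^ 2) / joint h (t, z))) ∂phaseMeas d := by
        refine integral_mono (hi.sub hn.1) (hX.add hV).neg fun z => ?_
        refine (hS.mat_lyap_le hlam hR (t, z) ht).trans_eq ?_
        simp only [← mul_div_assoc, ← add_div, Finset.mul_sum, ← Finset.sum_add_distrib,
          Finset.sum_div]
    _ = _ := by
        rw [integral_neg, integral_add hX hV, integral_const_mul, integral_const_mul]
        rfl

/-- The exponential rate of decay. -/
def rate (lam : ℝ) : ℝ := min (2 / (aC lam + 1 + bC lam)) (lam / 3)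

theorem bC_pos {lam : ℝ} (hlam : 0 < lam) : 0 < bC lam := by unfold bC; positivity

theorem rate_pos {lam : ℝ} (hlam : 0 < lam) : 0 < rate lam := by
  have h1 := two_le_aC lam
  have h2 := bC_pos hlam
  exact lt_min (by positivity) (by positivity)

theorem SolvesLRB.energy_decay {lam : ℝ} (hlam : 0 < lam) (hS : SolvesLRB d lam h)
    (hR : Regular d h) (hm : ∀ t, 0 ≤ t → intMu d (h t) = 1) {t : ℝ} (ht : 0 ≤ t) :
    energy lam h t ≤ Real.exp (-rate lam * t) * energy lam h 0 := by
  choose! E' hE hE' using fun s (hs : 0 ≤ s) => hS.energy_deriv hlam hR hs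
  have ha := two_le_aC lam
  have hb := bC_pos hlam
  have hkey (s : ℝ) (hs : 0 ≤ s) : E' s ≤ -rate lam * energy lam h s := by
    have hX := hR.fisherX_nonneg s
    have hV := hR.fisherV_nonneg s
    have h1 : energy lam h s ≤ (aC lam + 1 + bC lam) * fisherX h s + 3 * fisherV h s := by
      have := hR.energy_upper (lam := lam) s
      have := mul_le_mul_of_nonneg_left (hR.HPi_le_fisherX (hm s hs)) hb.le
      linarith
    have h2 : rate lam * (aC lam + 1 + bC lam) ≤ 2 := by
      rw [← le_div_iff₀ (by positivity)]
      exact min_le_left _ _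
    have h3 : rate lam * 3 ≤ lam := by
      rw [← le_div_iff₀ (by positivity)]
      exact min_le_right _ _
    have h4 := mul_le_mul_of_nonneg_left h1 (rate_pos hlam).le
    have h5 := mul_le_mul_of_nonneg_right h2 hX
    have h6 := mul_le_mul_of_nonneg_right h3 hV
    linarith [hE' s hs]
  have hF (s : ℝ) (hs : 0 ≤ s) : HasDerivAt (fun s => Real.exp (rate lam * s) * energy lam h s)
      (Real.exp (rate lam * s) * rate lam * energy lam h s + Real.exp (rate lam * s) * E' s) s := by
    have h1 : HasDerivAt (fun s => rate lam * s) (rate lam) s := by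
      simpa using (hasDerivAt_id s).const_mul (rate lam)
    exact h1.exp.mul (hE s hs)
  have hanti : AntitoneOn (fun s => Real.exp (rate lam * s) * energy lam h s) (Set.Ici 0) := by
    refine antitoneOn_of_deriv_nonpos (convex_Ici 0)
      (fun s hs => (hF s hs).continuousAt.continuousWithinAt) (fun s hs => ?_) fun s hs => ?_
    · rw [interior_Ici] at hs
      exact (hF s (le_of_lt hs)).differentiableAt.differentiableWithinAt
    · rw [interior_Ici] at hs
      have hs' : 0 ≤ s := le_of_lt hs
      rw [(hF s hs').deriv]
      have := mul_le_mul_of_nonneg_left (hkey s hs') (Real.exp_pos (rate lam * s)).le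
      linarith
  have h1 := hanti (Set.mem_Ici.2 le_rfl) (Set.mem_Ici.2 ht) ht
  simp only [mul_zero, Real.exp_zero, one_mul] at h1
  have h2 := mul_le_mul_of_nonneg_left h1 (Real.exp_pos (-rate lam * t)).le
  rwa [← mul_assoc, ← Real.exp_add, neg_mul, neg_add_cancel, Real.exp_zero, one_mul,
    ← neg_mul] at h2

end

/-- Entropic hypocoercivity for the linear relaxation Boltzmann equation:
there are positive constants `Λ, α, β, γ` depending only on `λ` (not on the dimension) such that
any suitably regular normalized solution satisfies
`I(h_t) + β H_Π(h_t) ≤ e^{-Λt} (α I(h_0) + 2β H_Π(h_0))` and `H(h_t) ≤ γ e^{-Λt} I(h_0)`. -/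
theorem linear_relaxation_entropic_hypocoercivity (lam : ℝ) (hlam : 0 < lam) :
    ∃ Lam alpha beta gamma : ℝ, 0 < Lam ∧ 0 < alpha ∧ 0 < beta ∧ 0 < gamma ∧
      ∀ (d : ℕ), 1 ≤ d →
        ∀ h : ℝ → (Fin d → ℝ) → (Fin d → ℝ) → ℝ,
          Regular d h →
          (∀ t, 0 ≤ t → intMu d (h t) = 1) →
          SolvesLRB d lam h →
          ∀ t : ℝ, 0 ≤ t →
            Ifull d (h t) + beta * HPi d (h t)
                ≤ Real.exp (-Lam * t) * (alpha * Ifull d (h 0) + 2 * beta * HPi d (h 0)) ∧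
            Hent d (h t) ≤ gamma * Real.exp (-Lam * t) * Ifull d (h 0) := by
  have ha := two_le_aC lam
  have hb := bC_pos hlam
  refine ⟨rate lam, aC lam + 1, bC lam, 12 * (aC lam + 1 + 2 * bC lam), rate_pos hlam,
    by positivity, hb, by positivity, fun d _ h hR hm hS t ht => ?_⟩
  have hX := hR.fisherX_nonneg 0
  have hV := hR.fisherV_nonneg 0
  have hP := hR.HPi_nonneg (hm 0 le_rfl)
  have hPX := hR.HPi_le_fisherX (hm 0 le_rfl)
  have hI := hR.Ifull_eq 0
  have hexp := Real.exp_pos (-rate lam * t)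
  have hE0 : energy lam h 0 ≤ (aC lam + 1) * Ifull d (h 0) + 2 * bC lam * HPi d (h 0) := by
    have h1 := hR.energy_upper (lam := lam) 0
    have h2 : 3 * fisherV h 0 ≤ (aC lam + 1) * fisherV h 0 :=
      mul_le_mul_of_nonneg_right (by linarith) hV
    have h3 := mul_nonneg hb.le hP
    rw [hI]
    linarith
  have hmain : Ifull d (h t) + bC lam * HPi d (h t)
      ≤ Real.exp (-rate lam * t) * ((aC lam + 1) * Ifull d (h 0) + 2 * bC lam * HPi d (h 0)) :=
    (hR.energy_lower t).trans ((hS.energy_decay hlam hR hm ht).trans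
      (mul_le_mul_of_nonneg_left hE0 hexp.le))
  refine ⟨hmain, ?_⟩
  have h1 := hR.Hent_le (hm t ht)
  have h2 := mul_nonneg hb.le (hR.HPi_nonneg (hm t ht))
  have h3 : (aC lam + 1) * Ifull d (h 0) + 2 * bC lam * HPi d (h 0)
      ≤ (aC lam + 1 + 2 * bC lam) * Ifull d (h 0) := by
    have : bC lam * HPi d (h 0) ≤ bC lam * Ifull d (h 0) :=
      mul_le_mul_of_nonneg_left (by linarith) hb.le
    linarith
  have h4 := mul_le_mul_of_nonneg_left h3 hexp.le
  linarith

end
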